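/- arXiv:1211.2514 — 4 statements merged into one kernel-verified Lean document; each statement's English description precedes it below -/
import Mathlib

section
/- Theorem (general criterion for a non-trivial critical radius): Let (Ω, 𝒜, ℙ) be a probability space and X : Ω → (subsets of ℝ²) a random point configuration such that for ℙ-a.e. ω the set X(ω) is locally finite. Assume: (i) there exist θ₁ > 0 and a function c₁ : (0,∞) → ℝ with c₁(θ) → ∞ as θ → ∞ such that for every θ ≥ θ₁, every positive integer L, and every collection of L distinct standard squares of side θ whose union Γ is a connected subset of ℝ², one has ℙ{ω : X(ω) ∩ Γ = ∅} ≤ exp(−c₁(θ)·L); (ii) there exist θ₂ > 0 and a function c₂ : (0,∞) × ℕ → ℝ such that for every M > 0 there is θ_M so that for each θ ≥ θ_M there is k_M with c₂(θ,k) ≥ M for all k ≥ k_M, and such that for every θ ≥ θ₂, every k ∈ ℕ, every positive integer L, and every collection of L distinct standard squares of side θ whose union Γ is connected, one has ℙ{ω : each of the L standard squares contains at least k points of X(ω)} ≤ exp(−c₂(θ,k)·L). Then there exists r_c with 0 < r_c < ∞ such that for every r with 0 < r < r_c, ℙ{ω : the Boolean model with radius r on X(ω) has an infinite cluster} = 0,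 and for every r with r_c < r < ∞, ℙ{ω : the Boolean model with radius r on X(ω) has an infinite cluster} > 0. -/
/-!
The critical radius is the supremum of the radii for which an infinite cluster has probability
zero. The existence of an infinite cluster is monotone in the radius, so it suffices to find one
radius with positive probability and to show that small radii have probability zero. Both halves
rest on `measure_connection_le`: if every connected collection of `n` squares is contained in a
random set `F` of squares with probability at most `ε ^ n`, then a connection in `F` from a given
square over distance `n` has probability at most `(9 ε) ^ n`, because it contains one of at most
`9 ^ n` self-avoiding walks of length `n`.

Small radii: call a square crowded if it contains at least `k` points. When `r` is much smaller
than `θ / k`, a chain of the Boolean model that avoids crowded squares over a distance `θ` would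
visit more than `9 k` points inside nine sparse squares (`dist_lt_of_sparse`). Hence a cluster stays
within distance `θ` of the square of its starting point and the crowded components touching it, and
an infinite cluster of a locally finite configuration forces an infinite connected component of
crowded squares (`exists_unbounded_crowded`), an event of probability zero.

Large radii: for `r = 2 θ` an infinite edge-connected component of nonempty squares gives an
infinite cluster. If the component `A` of the square `0` is finite, a Peierls argument
(`exists_blocking_connection`) produces a connected set `S` of empty squares starting at some
`(n, 0)` with `n > 0` and reaching the nonpositive horizontal axis. The topological input is
elementary parity: the edges between `A` and a component `S` of empty squares form a mod 2 cocycle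
(`square_parity`), which is the coboundary of the function `g` counting such edges on horizontal
rays to the right. When `S` starts just to the right of the last point of `A` on the axis, `g = 1`
on the connected set `A`, while `g = 0` far to the left, so `S` is met again on the negative side.
Summing the exponential bounds over `n` gives total probability less than one.
-/

open MeasureTheory ProbabilityTheory Filter

/-- Two points `x, y` are connected in the Boolean model with radius `r` on `P ⊆ ℝ² = ℂ`:
there is a finite sequence of points of `P` from `x` to `y` with consecutive points at
Euclidean distance `< 2r`. -/
def boolConn (P : Set ℂ) (r : ℝ) (x y : ℂ) : Prop :=
  ∃ (n : ℕ) (c : Fin (n + 1) → ℂ), (∀ i, c i ∈ P) ∧ c 0 = x ∧ c (Fin.last n) = y ∧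
    ∀ i : Fin n, dist (c i.castSucc) (c i.succ) < 2 * r

/-- The cluster of `x` in the Boolean model with radius `r` on `P`. -/
def cluster (P : Set ℂ) (r : ℝ) (x : ℂ) : Set ℂ := {y | boolConn P r x y}

/-- The Boolean model with radius `r` on `P` has an infinite cluster. -/
def hasInfiniteCluster (P : Set ℂ) (r : ℝ) : Prop :=
  ∃ x ∈ P, (cluster P r x).Infinite
/-- The standard square of side `θ` indexed by `p = (m, n) ∈ ℤ × ℤ`:
the closed square `[mθ, (m+1)θ] × [nθ, (n+1)θ]`, identifying `ℝ²` with `ℂ`. -/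
def stdSquare (θ : ℝ) (p : ℤ × ℤ) : Set ℂ :=
  {z : ℂ | p.1 * θ ≤ z.re ∧ z.re ≤ (p.1 + 1) * θ ∧ p.2 * θ ≤ z.im ∧ z.im ≤ (p.2 + 1) * θ}
/-- The union of the standard squares of side `θ` indexed by a finite set `s`. -/
def squaresUnion (θ : ℝ) (s : Finset (ℤ × ℤ)) : Set ℂ := ⋃ p ∈ s, stdSquare θ p
/-- The set `A` contains at least `k` points. -/
def hasAtLeast (k : ℕ) (A : Set ℂ) : Prop := ∃ t : Finset ℂ, ↑t ⊆ A ∧ t.card = k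

/-! ### Connections between squares and the union bound over walks -/

/-- The graph on `ℤ²` joining two distinct elements of `F` whose standard squares touch. -/
def touchGraph (F : Set (ℤ × ℤ)) : SimpleGraph (ℤ × ℤ) where
  Adj a b := a ≠ b ∧ |a.1 - b.1| ≤ 1 ∧ |a.2 - b.2| ≤ 1 ∧ a ∈ F ∧ b ∈ F
  symm := ⟨by
    rintro a b ⟨h1, h2, h3, h4, h5⟩
    exact ⟨h1.symm, by rwa [abs_sub_comm], by rwa [abs_sub_comm], h5, h4⟩⟩
  loopless := ⟨fun a h => h.1 rfl⟩

lemma touchGraph_reachable_mem {F : Set (ℤ × ℤ)} {p q : ℤ × ℤ} (hp : p ∈ F)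
    (h : (touchGraph F).Reachable p q) : q ∈ F := by
  obtain ⟨w⟩ := h
  induction w with
  | nil => exact hp
  | cons hadj _ ih => exact ih hadj.2.2.2.2

lemma touchGraph_reachable_step {F : Set (ℤ × ℤ)} {p q q' : ℤ × ℤ} (hp : p ∈ F)
    (h : (touchGraph F).Reachable p q) (hq' : q' ∈ F) (h1 : |q.1 - q'.1| ≤ 1)
    (h2 : |q.2 - q'.2| ≤ 1) : (touchGraph F).Reachable p q' := by
  by_cases he : q = q'
  · exact he ▸ h
  · exact h.trans (SimpleGraph.Adj.reachable ⟨he, h1, h2, touchGraph_reachable_mem hp h, hq'⟩)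

lemma touchGraph_walk_displacement {F : Set (ℤ × ℤ)} {p q : ℤ × ℤ}
    (w : (touchGraph F).Walk p q) :
    |q.1 - p.1| ≤ (w.length : ℤ) ∧ |q.2 - p.2| ≤ (w.length : ℤ) := by
  induction w with
  | nil => simp
  | @cons u v w hadj w' ih =>
    have h1 := hadj.2.1
    have h2 := hadj.2.2.1
    simp only [SimpleGraph.Walk.length_cons, Nat.cast_add, Nat.cast_one, abs_le] at *
    omega

/-- A connection in `F` over distance at least `n` contains a self-avoiding sequence of `n`
consecutively touching squares of `F`. -/
lemma exists_injOn_walk {F : Set (ℤ × ℤ)} {p q : ℤ × ℤ} {n : ℕ}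
    (h : (touchGraph F).Reachable p q)
    (hd : (n : ℤ) ≤ |q.1 - p.1| ∨ (n : ℤ) ≤ |q.2 - p.2|) :
    ∃ w : ℕ → ℤ × ℤ, w 0 = p ∧ Set.InjOn w (Set.Iio n) ∧ (∀ i < n, w i ∈ F) ∧
      ∀ i < n, |(w i).1 - (w (i + 1)).1| ≤ 1 ∧ |(w i).2 - (w (i + 1)).2| ≤ 1 := by
  classical
  obtain ⟨w0⟩ := h
  have hpath := w0.toPath.2
  have hlen := touchGraph_walk_displacement (w0.toPath : (touchGraph F).Walk p q)
  set w := (w0.toPath : (touchGraph F).Walk p q)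
  have hn : n ≤ w.length := by omega
  refine ⟨w.getVert, by simp, hpath.getVert_injOn.mono fun i hi => ?_, fun i hi => ?_,
    fun i hi => ?_⟩
  · simp only [Set.mem_Iio, Set.mem_ofPred_eq] at *
    omega
  · exact (w.adj_getVert_succ (i := i) (by omega)).2.2.2.1
  · exact ⟨(w.adj_getVert_succ (i := i) (by omega)).2.1,
      (w.adj_getVert_succ (i := i) (by omega)).2.2.1⟩

lemma stdSquare_isConnected {θ : ℝ} (hθ : 0 < θ) (p : ℤ × ℤ) : IsConnected (stdSquare θ p) := by
  have hne : (stdSquare θ p).Nonempty :=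
    ⟨⟨p.1 * θ, p.2 * θ⟩, by
      simp only [stdSquare, Set.mem_ofPred_eq]
      refine ⟨?_, ?_, ?_, ?_⟩ <;> nlinarith⟩
  refine ⟨hne, Convex.isPreconnected ?_⟩
  intro x hx y hy a b ha hb hab
  obtain ⟨hx1, hx2, hx3, hx4⟩ := hx
  obtain ⟨hy1, hy2, hy3, hy4⟩ := hy
  obtain rfl : b = 1 - a := by linarith
  simp only [stdSquare, Set.mem_ofPred_eq, Complex.add_re, Complex.add_im, Complex.real_smul,
    Complex.mul_re, Complex.mul_im, Complex.ofReal_re, Complex.ofReal_im, zero_mul, sub_zero,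
    add_zero]
  refine ⟨?_, ?_, ?_, ?_⟩
  · nlinarith [mul_le_mul_of_nonneg_left hx1 ha, mul_le_mul_of_nonneg_left hy1 hb]
  · nlinarith [mul_le_mul_of_nonneg_left hx2 ha, mul_le_mul_of_nonneg_left hy2 hb]
  · nlinarith [mul_le_mul_of_nonneg_left hx3 ha, mul_le_mul_of_nonneg_left hy3 hb]
  · nlinarith [mul_le_mul_of_nonneg_left hx4 ha, mul_le_mul_of_nonneg_left hy4 hb]

lemma max_mul_bounds {θ : ℝ} (hθ : 0 < θ) {a b : ℤ} (h : |a - b| ≤ 1) :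
    a * θ ≤ (max a b : ℤ) * θ ∧ (max a b : ℤ) * θ ≤ (a + 1) * θ ∧
      b * θ ≤ (max a b : ℤ) * θ ∧ (max a b : ℤ) * θ ≤ (b + 1) * θ := by
  rw [abs_le] at h
  have h1 : a ≤ max a b := le_max_left _ _
  have h2 : max a b ≤ a + 1 := by omega
  have h3 : b ≤ max a b := le_max_right _ _
  have h4 : max a b ≤ b + 1 := by omega
  refine ⟨?_, ?_, ?_, ?_⟩ <;> refine mul_le_mul_of_nonneg_right ?_ hθ.le <;> exact_mod_cast ‹_›

lemma stdSquare_inter_nonempty {θ : ℝ} (hθ : 0 < θ) {p q : ℤ × ℤ} (h1 : |p.1 - q.1| ≤ 1)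
    (h2 : |p.2 - q.2| ≤ 1) : (stdSquare θ p ∩ stdSquare θ q).Nonempty := by
  obtain ⟨a1, a2, a3, a4⟩ := max_mul_bounds hθ h1
  obtain ⟨b1, b2, b3, b4⟩ := max_mul_bounds hθ h2
  exact ⟨⟨(max p.1 q.1 : ℤ) * θ, (max p.2 q.2 : ℤ) * θ⟩, ⟨a1, a2, b1, b2⟩, ⟨a3, a4, b3, b4⟩⟩

lemma squaresUnion_walk_isConnected {θ : ℝ} (hθ : 0 < θ) {n : ℕ} (hn : 0 < n) (w : ℕ → ℤ × ℤ)
    (hw : ∀ i < n, |(w i).1 - (w (i + 1)).1| ≤ 1 ∧ |(w i).2 - (w (i + 1)).2| ≤ 1) :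
    IsConnected (squaresUnion θ ((Finset.range n).image w)) := by
  have he : squaresUnion θ ((Finset.range n).image w) = ⋃ i ∈ Set.Iio n, stdSquare θ (w i) := by
    ext z
    simp [squaresUnion]
  rw [he]
  refine IsConnected.biUnion_of_chain ⟨0, hn⟩ Set.ordConnected_Iio
    (fun i _ => stdSquare_isConnected hθ _) fun i hi _ => ?_
  exact stdSquare_inter_nonempty hθ (hw i hi).1 (hw i hi).2

/-- The nine displacements between touching (or equal) squares. -/
def steps : Finset (ℤ × ℤ) := {-1, 0, 1} ×ˢ {-1, 0, 1}

lemma card_steps : steps.card = 9 := by decide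

/-- The position after `i` steps of the walk started at `p` with displacements `d`. -/
def walkPos (p : ℤ × ℤ) {n : ℕ} (d : Fin n → steps) (i : ℕ) : ℤ × ℤ :=
  p + ∑ j : Fin n, if (j : ℕ) < i then (d j : ℤ × ℤ) else 0

lemma exists_walkPos_eq {p : ℤ × ℤ} {n : ℕ} {w : ℕ → ℤ × ℤ} (h0 : w 0 = p)
    (hw : ∀ i < n, |(w i).1 - (w (i + 1)).1| ≤ 1 ∧ |(w i).2 - (w (i + 1)).2| ≤ 1) :
    ∃ d : Fin n → steps, ∀ i ≤ n, walkPos p d i = w i := by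
  refine ⟨fun j => ⟨w (j + 1) - w j, ?_⟩, fun i => ?_⟩
  · have := hw j j.2
    simp only [abs_le] at this
    simp only [steps, Finset.mem_product, Finset.mem_insert, Finset.mem_singleton, Prod.fst_sub,
      Prod.snd_sub]
    omega
  · induction i with
    | zero => intro _; simp [walkPos, h0]
    | succ i ih =>
      intro hi
      have ih' := ih (by omega)
      have hin : i < n := by omega
      have hsum : ∀ F : Fin n → ℤ × ℤ, (∑ j : Fin n, if (j : ℕ) < i + 1 then F j else 0) =
          (∑ j : Fin n, if (j : ℕ) < i then F j else 0) + F ⟨i, hin⟩ := by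
        intro F
        have : ∀ j : Fin n, (if (j : ℕ) < i + 1 then F j else 0) =
            (if (j : ℕ) < i then F j else 0) + (if j = ⟨i, hin⟩ then F j else 0) := by
          intro j
          rcases lt_trichotomy (j : ℕ) i with h | h | h
          · have h' : j ≠ ⟨i, hin⟩ := fun e => by simp [e] at h
            simp [h, h', Nat.lt_succ_of_lt h]
          · have h' : j = ⟨i, hin⟩ := Fin.ext h
            subst h'
            simp
          · have h' : j ≠ ⟨i, hin⟩ := fun e => by simp [e] at h
            have h1 : ¬ ((j : ℕ) < i + 1) := by omega
            have h2 : ¬ ((j : ℕ) < i) := by omega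
            simp only [if_neg h1, if_neg h2, if_neg h', add_zero]
        rw [Finset.sum_congr rfl fun j _ => this j, Finset.sum_add_distrib]
        simp
      simp only [walkPos] at ih' ⊢
      rw [hsum, ← add_assoc, ih']
      simp

/-- Union bound over the at most `9 ^ n` self-avoiding walks of `n` squares from `p`: if
connected collections of `n` squares lie in the random set `F` with probability at most `ε ^ n`,
then long connections in `F` are exponentially unlikely. -/
lemma measure_connection_le {Ω : Type*} [MeasurableSpace Ω] (μ : Measure Ω)
    (F : Ω → Set (ℤ × ℤ)) {θ : ℝ} (hθ : 0 < θ) (ε : ENNReal)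
    (hF : ∀ s : Finset (ℤ × ℤ), 0 < s.card → IsConnected (squaresUnion θ s) →
      μ {ω | ∀ p ∈ s, p ∈ F ω} ≤ ε ^ s.card) (p : ℤ × ℤ) {n : ℕ} (hn : 0 < n) :
    μ {ω | p ∈ F ω ∧ ∃ q, (touchGraph (F ω)).Reachable p q ∧
      ((n : ℤ) ≤ |q.1 - p.1| ∨ (n : ℤ) ≤ |q.2 - p.2|)} ≤ (9 * ε) ^ n := by
  classical
  set T : (Fin n → steps) → Finset (ℤ × ℤ) := fun d => (Finset.range n).image (walkPos p d)
  calc _ ≤ μ (⋃ d : Fin n → steps,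
        {ω | ((T d).card = n ∧ IsConnected (squaresUnion θ (T d))) ∧ ∀ q ∈ T d, q ∈ F ω}) := by
        refine measure_mono ?_
        rintro ω ⟨-, q, hq, hd⟩
        obtain ⟨w, h0, hinj, hwF, hw⟩ := exists_injOn_walk hq hd
        obtain ⟨d, hd⟩ := exists_walkPos_eq h0 hw
        have hT : T d = (Finset.range n).image w :=
          Finset.image_congr fun i hi => hd i (by simpa using (Finset.mem_range.1 hi).le)
        refine Set.mem_iUnion.2 ⟨d, ⟨?_, ?_⟩, ?_⟩
        · rw [hT, Finset.card_image_of_injOn (by simpa [Finset.coe_range] using hinj),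
            Finset.card_range]
        · rw [hT]
          exact squaresUnion_walk_isConnected hθ hn w hw
        · rw [hT]
          intro q hq
          obtain ⟨i, hi, rfl⟩ := Finset.mem_image.1 hq
          exact hwF i (Finset.mem_range.1 hi)
    _ ≤ ∑ d : Fin n → steps, μ {ω | ((T d).card = n ∧ IsConnected (squaresUnion θ (T d))) ∧
          ∀ q ∈ T d, q ∈ F ω} := measure_iUnion_fintype_le _ _
    _ ≤ ∑ d : Fin n → steps, ε ^ n := by
        refine Finset.sum_le_sum fun d _ => ?_
        by_cases hc : (T d).card = n ∧ IsConnected (squaresUnion θ (T d))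
        · refine (measure_mono fun ω hω => hω.2).trans ?_
          have := hF (T d) (by omega) hc.2
          rwa [hc.1] at this
        · simp [hc]
    _ = (9 * ε) ^ n := by
        have : Fintype.card steps = 9 := by simp [card_steps]
        simp [mul_pow, this]

/-! ### Parity and the Peierls argument -/

/-- The squares `a` and `b` share an edge. -/
def edgeAdj (a b : ℤ × ℤ) : Prop :=
  (b.1 = a.1 + 1 ∧ b.2 = a.2) ∨ (a.1 = b.1 + 1 ∧ b.2 = a.2) ∨
    (b.1 = a.1 ∧ b.2 = a.2 + 1) ∨ (b.1 = a.1 ∧ a.2 = b.2 + 1)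

/-- One step between squares sharing an edge that lands outside `E`. -/
def edgeStep (E : Set (ℤ × ℤ)) (a b : ℤ × ℤ) : Prop := edgeAdj a b ∧ b ∉ E

open Classical in
/-- If squares outside `A` sharing an edge with `A` lie in `E`, and `S` is closed under touching
inside `E`, then the edges between `A` and `S` form a mod 2 cocycle on every unit square. -/
lemma square_parity (A S E : Set (ℤ × ℤ)) (hAE : ∀ q ∈ A, q ∉ E) (hSE : ∀ q ∈ S, q ∈ E)
    (hstep : ∀ u ∈ A, ∀ v, edgeAdj u v → v ∉ A → v ∈ E)
    (hSstep : ∀ u ∈ S, ∀ v ∈ E, |u.1 - v.1| ≤ 1 → |u.2 - v.2| ≤ 1 → v ∈ S) (x y : ℤ) :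
    let f : ℤ × ℤ → ℤ × ℤ → ZMod 2 :=
      fun u v => if (u ∈ A ∧ v ∈ S) ∨ (u ∈ S ∧ v ∈ A) then 1 else 0
    f (x, y) (x + 1, y) + f (x, y + 1) (x + 1, y + 1) + f (x + 1, y) (x + 1, y + 1) =
      f (x, y) (x, y + 1) := by
  intro f
  set P : Set (ℤ × ℤ) := {q | (q.1 = x ∨ q.1 = x + 1) ∧ (q.2 = y ∨ q.2 = y + 1)}
  have h00 : (x, y) ∈ P := by simp [P]
  have h10 : (x + 1, y) ∈ P := by simp [P]
  have h01 : (x, y + 1) ∈ P := by simp [P]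
  have h11 : (x + 1, y + 1) ∈ P := by simp [P]
  by_cases hex : ∃ u ∈ P, u ∈ S
  · -- All vertices of the square that lie in `E` lie in `S`, so `f` is the coboundary of the
    -- indicator of `A`.
    obtain ⟨u, huP, huS⟩ := hex
    have hES : ∀ v ∈ P, v ∈ E → v ∈ S := by
      intro v hv hvE
      obtain ⟨h1, h2⟩ := huP
      obtain ⟨h3, h4⟩ := hv
      exact hSstep u huS v hvE (by rw [abs_le]; omega) (by rw [abs_le]; omega)
    have hf : ∀ v ∈ P, ∀ w ∈ P, edgeAdj v w → edgeAdj w v →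
        f v w = (if v ∈ A then 1 else 0) + (if w ∈ A then 1 else 0) := by
      intro v hv w hw hvw hwv
      have two : (1 : ZMod 2) + 1 = 0 := by decide
      have hAS : ∀ q ∈ A, q ∉ S := fun q hq hqS => hAE q hq (hSE q hqS)
      by_cases hvA : v ∈ A <;> by_cases hwA : w ∈ A
      · simp [f, hvA, hwA, hAS v hvA, hAS w hwA, two]
      · simp [f, hvA, hwA, hES w hw (hstep v hvA w hvw hwA)]
      · simp [f, hvA, hwA, hES v hv (hstep w hwA v hwv hvA)]
      · simp [f, hvA, hwA]
    rw [hf _ h00 _ h10 (by simp [edgeAdj]) (by simp [edgeAdj]),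
      hf _ h01 _ h11 (by simp [edgeAdj]) (by simp [edgeAdj]),
      hf _ h10 _ h11 (by simp [edgeAdj]) (by simp [edgeAdj]),
      hf _ h00 _ h01 (by simp [edgeAdj]) (by simp [edgeAdj])]
    generalize (if (x, y) ∈ A then (1 : ZMod 2) else 0) = s
    generalize (if (x + 1, y) ∈ A then (1 : ZMod 2) else 0) = t
    generalize (if (x, y + 1) ∈ A then (1 : ZMod 2) else 0) = u
    generalize (if (x + 1, y + 1) ∈ A then (1 : ZMod 2) else 0) = v
    revert s t u v
    decide
  · push Not at hex
    simp [f, hex _ h00, hex _ h10, hex _ h01, hex _ h11]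

/-- Discrete Peierls argument. If `0 ∉ E` and the edge-connected component `A` of `0` in the
complement of `E` is finite, then some `(n, 0) ∈ E` with `n > 0` is connected in `E` to a square at
horizontal distance at least `n`, namely one on the nonpositive horizontal axis. -/
lemma exists_blocking_connection {E : Set (ℤ × ℤ)} (h0 : (0, 0) ∉ E)
    (hfin : {q | Relation.ReflTransGen (edgeStep E) (0, 0) q}.Finite) :
    ∃ n : ℕ, 0 < n ∧ ((n : ℤ), (0 : ℤ)) ∈ E ∧
      ∃ q, (touchGraph E).Reachable ((n : ℤ), (0 : ℤ)) q ∧ (n : ℤ) ≤ |q.1 - n| := by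
  classical
  set A : Set (ℤ × ℤ) := {q | Relation.ReflTransGen (edgeStep E) (0, 0) q} with hA
  have hA0 : ((0 : ℤ), (0 : ℤ)) ∈ A := Relation.ReflTransGen.refl
  have hAE : ∀ q ∈ A, q ∉ E := by
    intro q hq
    rcases Relation.ReflTransGen.cases_tail hq with h | ⟨c, _, h⟩
    · rwa [h]
    · exact h.2
  have hstep : ∀ u ∈ A, ∀ v, edgeAdj u v → v ∉ A → v ∈ E := by
    intro u hu v huv hv
    by_contra hvE
    exact hv (Relation.ReflTransGen.tail hu ⟨huv, hvE⟩)
  obtain ⟨N, hN⟩ : ∃ N : ℤ, ∀ q ∈ A, |q.1| < N ∧ |q.2| < N := by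
    obtain ⟨N1, h1⟩ := (hfin.image fun q => |q.1|).bddAbove
    obtain ⟨N2, h2⟩ := (hfin.image fun q => |q.2|).bddAbove
    refine ⟨max N1 N2 + 1, fun q hq => ?_⟩
    have a1 : |q.1| ≤ N1 := h1 ⟨q, hq, rfl⟩
    have a2 : |q.2| ≤ N2 := h2 ⟨q, hq, rfl⟩
    omega
  have hnotA : ∀ x y : ℤ, (N ≤ x ∨ x ≤ -N ∨ N ≤ y) → (x, y) ∉ A := by
    intro x y h hxy
    have := hN _ hxy
    simp only [abs_lt] at this
    omega
  obtain ⟨a, haA, hamax⟩ := Int.exists_greatest_of_bdd (P := fun x : ℤ => (x, (0 : ℤ)) ∈ A)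
    ⟨N, fun z hz => by have := (hN _ hz).1; simp only [abs_lt] at this; omega⟩ ⟨0, hA0⟩
  have ha0 : 0 ≤ a := hamax 0 hA0
  have haN : a < N := by have := (hN _ haA).1; simp only [abs_lt] at this; omega
  have hbA : (a + 1, (0 : ℤ)) ∉ A := fun h => by have := hamax _ h; omega
  have hbE : (a + 1, (0 : ℤ)) ∈ E := hstep _ haA _ (by simp [edgeAdj]) hbA
  set S : Set (ℤ × ℤ) := {q | (touchGraph E).Reachable (a + 1, (0 : ℤ)) q} with hS
  have hbS : (a + 1, (0 : ℤ)) ∈ S := SimpleGraph.Reachable.refl _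
  have hSE : ∀ q ∈ S, q ∈ E := fun q hq => touchGraph_reachable_mem hbE hq
  have hSstep : ∀ u ∈ S, ∀ v ∈ E, |u.1 - v.1| ≤ 1 → |u.2 - v.2| ≤ 1 → v ∈ S :=
    fun u hu v hv h1 h2 => touchGraph_reachable_step hbE hu hv h1 h2
  -- `f` is the mod 2 indicator of the edges between `A` and `S`, and `g` its sum along the
  -- horizontal ray to the right.
  set f : ℤ × ℤ → ℤ × ℤ → ZMod 2 :=
    fun u v => if (u ∈ A ∧ v ∈ S) ∨ (u ∈ S ∧ v ∈ A) then 1 else 0 with hf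
  have hfA : ∀ u v, u ∉ A → v ∉ A → f u v = 0 := by
    intro u v hu hv
    simp [hf, hu, hv]
  have hfAA : ∀ u v, u ∈ A → v ∈ A → f u v = 0 := by
    intro u v hu hv
    have h1 : u ∉ S := fun h => hAE u hu (hSE u h)
    have h2 : v ∉ S := fun h => hAE v hv (hSE v h)
    simp [hf, h1, h2]
  -- Every unit square carries an even number of such edges.
  have hsq : ∀ x y : ℤ, f (x, y) (x + 1, y) + f (x, y + 1) (x + 1, y + 1) +
      f (x + 1, y) (x + 1, y + 1) = f (x, y) (x, y + 1) := by
    intro x y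
    exact square_parity A S E hAE hSE hstep hSstep x y
  set g : ℤ → ℤ → ZMod 2 := fun x y => ∑ i ∈ Finset.Ico x N, f (i, y) (i + 1, y) with hg
  have hgN : ∀ x y, N ≤ x → g x y = 0 := by
    intro x y hx
    simp [hg, Finset.Ico_eq_empty_of_le hx]
  have hgx : ∀ x y, g x y = f (x, y) (x + 1, y) + g (x + 1) y := by
    intro x y
    by_cases hx : x < N
    · simp only [hg]
      rw [← Finset.insert_Ico_add_one_left_eq_Ico hx, Finset.sum_insert (by simp)]
    · rw [hgN x y (by omega), hgN (x + 1) y (by omega),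
        hfA _ _ (hnotA _ _ (by omega)) (hnotA _ _ (by omega)), add_zero]
  have hgy : ∀ (k : ℕ) (x y : ℤ), N - k ≤ x → g x y + g x (y + 1) = f (x, y) (x, y + 1) := by
    intro k
    induction k with
    | zero =>
      intro x y hx
      rw [hgN _ _ (by omega), hgN _ _ (by omega),
        hfA _ _ (hnotA _ _ (by omega)) (hnotA _ _ (by omega)), add_zero]
    | succ k ih =>
      intro x y hx
      rw [hgx x y, hgx x (y + 1), ← hsq, ← ih (x + 1) y (by push_cast at hx; omega)]
      ring
  have hgy' : ∀ x y : ℤ, g x y + g x (y + 1) = f (x, y) (x, y + 1) := fun x y =>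
    hgy (N - x).toNat x y (by omega)
  have hgtop : ∀ x y, N ≤ y → g x y = 0 := by
    intro x y hy
    exact Finset.sum_eq_zero fun i _ => hfA _ _ (hnotA _ _ (by omega)) (hnotA _ _ (by omega))
  have hself : ∀ s t : ZMod 2, s + t = 0 → s = t := by decide
  have hgleft : ∀ (k : ℕ) (y : ℤ), N - k ≤ y → g (-N) y = 0 := by
    intro k
    induction k with
    | zero => intro y hy; exact hgtop _ _ (by omega)
    | succ k ih =>
      intro y hy
      have := hgy' (-N) y
      rw [hfA _ _ (hnotA _ _ (by omega)) (hnotA _ _ (by omega)),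
        ih (y + 1) (by push_cast at hy; omega), add_zero] at this
      exact this
  have hgconst : ∀ q ∈ A, g q.1 q.2 = g 0 0 := by
    intro q hq
    induction hq with
    | refl => rfl
    | @tail u v hu huv ih =>
      have hv : v ∈ A := Relation.ReflTransGen.tail hu huv
      rw [← ih]
      obtain ⟨u1, u2⟩ := u
      obtain ⟨v1, v2⟩ := v
      have huA : (u1, u2) ∈ A := hu
      rcases huv.1 with ⟨h1, h2⟩ | ⟨h1, h2⟩ | ⟨h1, h2⟩ | ⟨h1, h2⟩ <;> simp only at h1 h2 <;>
        subst h1 <;> subst h2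
      · rw [hgx u1 v2, hfAA _ _ huA hv, zero_add]
      · rw [hgx v1 v2, hfAA _ _ hv huA, zero_add]
      · have := hgy' v1 u2
        rw [hfAA _ _ huA hv] at this
        exact (hself _ _ this).symm
      · have := hgy' v1 v2
        rw [hfAA _ _ hv huA] at this
        exact hself _ _ this
  have hga1 : g (a + 1) 0 = 0 := by
    refine Finset.sum_eq_zero fun i hi => hfA _ _ (fun h => ?_) (fun h => ?_) <;>
    · have := hamax _ h
      have := (Finset.mem_Ico.1 hi).1
      omega
  have hg0 : g 0 0 = 1 := by
    rw [← hgconst _ haA]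
    simp only
    rw [hgx, hga1, add_zero]
    simp [hf, haA, hbS]
  obtain ⟨i, hi, hi'⟩ : ∃ i : ℤ, i < 0 ∧ f (i, 0) (i + 1, 0) ≠ 0 := by
    by_contra hcon
    push Not at hcon
    have hneg : ∀ k : ℕ, g (-k) 0 = 1 := by
      intro k
      induction k with
      | zero => simpa using hg0
      | succ k ih =>
        rw [hgx, hcon _ (by push_cast; omega), zero_add, ← ih]
        congr 1
        push_cast
        ring
    have h1 := hneg N.toNat
    rw [Int.toNat_of_nonneg (by omega), hgleft N.toNat 0 (by omega)] at h1
    exact absurd h1 (by decide)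
  obtain ⟨q, hqS, hq⟩ : ∃ q ∈ S, q.1 ≤ 0 := by
    have : ((i, (0 : ℤ)) ∈ A ∧ (i + 1, (0 : ℤ)) ∈ S) ∨
        ((i, (0 : ℤ)) ∈ S ∧ (i + 1, (0 : ℤ)) ∈ A) := by
      by_contra hcon
      exact hi' (if_neg hcon)
    rcases this with h | h
    · exact ⟨_, h.2, by simp only; omega⟩
    · exact ⟨_, h.1, by simp only; omega⟩
  have hcast : (((a + 1).toNat : ℕ) : ℤ) = a + 1 := Int.toNat_of_nonneg (by omega)
  refine ⟨(a + 1).toNat, by omega, by rw [hcast]; exact hbE, q, by rw [hcast]; exact hqS, ?_⟩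
  rw [hcast, abs_of_nonpos (by omega)]
  omega

/-! ### Chains of points and clusters of squares -/

/-- One step of a chain in the Boolean model: the endpoint `b` lies in `P` within `2 r` of `a`. -/
def boolStep (P : Set ℂ) (r : ℝ) (a b : ℂ) : Prop := b ∈ P ∧ dist a b < 2 * r

lemma boolConn_iff {P : Set ℂ} {r : ℝ} {x y : ℂ} :
    boolConn P r x y ↔ x ∈ P ∧ Relation.ReflTransGen (boolStep P r) x y := by
  constructor
  · rintro ⟨n, c, hP, rfl, rfl, hc⟩
    refine ⟨hP 0, ?_⟩
    have : ∀ i : Fin (n + 1), Relation.ReflTransGen (boolStep P r) (c 0) (c i) := by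
      intro i
      induction i using Fin.induction with
      | zero => exact Relation.ReflTransGen.refl
      | succ i ih => exact ih.tail ⟨hP _, hc i⟩
    exact this _
  · rintro ⟨hx, h⟩
    induction h with
    | refl => exact ⟨0, fun _ => x, fun _ => hx, rfl, rfl, fun i => i.elim0⟩
    | @tail u v _ huv ih =>
      obtain ⟨n, c, hP, h0, hl, hc⟩ := ih
      refine ⟨n + 1, Fin.snoc (α := fun _ => ℂ) c v, ?_, ?_, ?_, ?_⟩
      · intro i
        refine Fin.lastCases ?_ (fun j => ?_) i
        · simpa using huv.1
        · simpa using hP j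
      · rw [← Fin.castSucc_zero, Fin.snoc_castSucc, h0]
      · simp
      · intro i
        refine Fin.lastCases ?_ (fun j => ?_) i
        · rw [Fin.snoc_castSucc, hl, Fin.succ_last, Fin.snoc_last]
          exact huv.2
        · rw [Fin.snoc_castSucc, Fin.succ_castSucc, Fin.snoc_castSucc]
          exact hc j

lemma hasInfiniteCluster_mono {P : Set ℂ} {r s : ℝ} (hrs : r ≤ s) (h : hasInfiniteCluster P r) :
    hasInfiniteCluster P s := by
  obtain ⟨x, hx, hinf⟩ := h
  refine ⟨x, hx, hinf.mono ?_⟩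
  rintro y ⟨n, c, hP, h0, hl, hc⟩
  exact ⟨n, c, hP, h0, hl, fun i => (hc i).trans_le (by linarith)⟩

/-- The index of the half-open square of side `θ` containing `z`. -/
noncomputable def squareIndex (θ : ℝ) (z : ℂ) : ℤ × ℤ := (⌊z.re / θ⌋, ⌊z.im / θ⌋)

lemma mem_stdSquare_squareIndex {θ : ℝ} (hθ : 0 < θ) (z : ℂ) :
    z ∈ stdSquare θ (squareIndex θ z) := by
  have h1 := Int.floor_le (z.re / θ)
  have h2 := (Int.lt_floor_add_one (z.re / θ)).le
  have h3 := Int.floor_le (z.im / θ)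
  have h4 := (Int.lt_floor_add_one (z.im / θ)).le
  rw [le_div_iff₀ hθ] at h1 h3
  rw [div_le_iff₀ hθ] at h2 h4
  exact ⟨h1, h2, h3, h4⟩

lemma floor_div_sub_le {θ : ℝ} (hθ : 0 < θ) {a b : ℝ} (h : |a - b| ≤ θ) :
    |⌊a / θ⌋ - ⌊b / θ⌋| ≤ 1 := by
  have hd : |a / θ - b / θ| ≤ 1 := by
    rw [← sub_div, abs_div, abs_of_pos hθ, div_le_one hθ]
    exact h
  rw [abs_le] at hd ⊢
  have h1 : ⌊a / θ⌋ ≤ ⌊b / θ⌋ + 1 := by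
    rw [← Int.floor_add_one]
    exact Int.floor_mono (by linarith)
  have h2 : ⌊b / θ⌋ ≤ ⌊a / θ⌋ + 1 := by
    rw [← Int.floor_add_one]
    exact Int.floor_mono (by linarith)
  omega

lemma squareIndex_near {θ : ℝ} (hθ : 0 < θ) {z w : ℂ} (h : dist w z ≤ θ) :
    |(squareIndex θ z).1 - (squareIndex θ w).1| ≤ 1 ∧
      |(squareIndex θ z).2 - (squareIndex θ w).2| ≤ 1 := by
  rw [dist_comm, Complex.dist_eq] at h
  exact ⟨floor_div_sub_le hθ (by simpa using (Complex.abs_re_le_norm (z - w)).trans h),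
    floor_div_sub_le hθ (by simpa using (Complex.abs_im_le_norm (z - w)).trans h)⟩

/-- A chain of small steps that starts at `z` and then avoids the squares indexed by `C` cannot
leave the disc of radius `θ` around `z` if the neighbouring squares outside `C` contain fewer
than `k` points: it would visit more than `9 k` points in nine squares. -/
lemma dist_lt_of_sparse {P : Set ℂ} {θ r : ℝ} {k : ℕ} (hθ : 0 < θ) (hr : 0 < r)
    (hrk : 2 * r * (9 * k + 2) ≤ θ) {C : Set (ℤ × ℤ)} {z : ℂ}
    (hC : ∀ q, |(squareIndex θ z).1 - q.1| ≤ 1 → |(squareIndex θ z).2 - q.2| ≤ 1 → q ∉ C →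
      ¬ hasAtLeast k (P ∩ stdSquare θ q)) {y : ℂ}
    (hy : Relation.ReflTransGen (fun a b => boolStep P r a b ∧ squareIndex θ b ∉ C) z y) :
    dist y z < θ := by
  classical
  by_contra hcon
  push Not at hcon
  have key : ∀ t : ℝ, 0 < t → t ≤ dist y z →
      ∃ w, Relation.ReflTransGen (fun a b => boolStep P r a b ∧ squareIndex θ b ∉ C) z w ∧
        dist w z < t ∧ t - 2 * r ≤ dist w z := by
    intro t ht
    clear hcon
    induction hy with
    | refl =>
      intro h
      rw [dist_self] at h
      linarith
    | @tail u v hu huv ih =>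
      intro h
      by_cases hut : t ≤ dist u z
      · exact ih hut
      · have h1 := dist_triangle v u z
        have h2 := huv.1.2
        rw [dist_comm] at h2
        exact ⟨u, hu, by linarith, by linarith⟩
  have key2 : ∀ j : Fin (9 * k + 1), ∃ w, Relation.ReflTransGen
      (fun a b => boolStep P r a b ∧ squareIndex θ b ∉ C) z w ∧
        dist w z < 2 * r * ((j : ℕ) + 2) ∧ 2 * r * ((j : ℕ) + 1) ≤ dist w z ∧ dist w z ≤ θ := by
    intro j
    have hj : ((j : ℕ) : ℝ) ≤ 9 * k := by exact_mod_cast Nat.lt_succ_iff.1 j.2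
    have hle : 2 * r * ((j : ℕ) + 2) ≤ θ := by nlinarith
    obtain ⟨w, hw1, hw2, hw3⟩ := key (2 * r * ((j : ℕ) + 2)) (by positivity) (hle.trans hcon)
    exact ⟨w, hw1, hw2, by linarith, by linarith⟩
  choose w hw1 hw2 hw3 hw4 using key2
  have hinj : Function.Injective w := by
    intro i j hij
    have a1 := hw2 i
    have a2 := hw3 i
    rw [hij] at a1 a2
    have b1 : 2 * r * ((j : ℕ) + 1 : ℝ) < 2 * r * ((i : ℕ) + 2) := (hw3 j).trans_lt a1
    have b2 : 2 * r * ((i : ℕ) + 1 : ℝ) < 2 * r * ((j : ℕ) + 2) := a2.trans_lt (hw2 j)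
    have c1 := lt_of_mul_lt_mul_left b1 (by positivity)
    have c2 := lt_of_mul_lt_mul_left b2 (by positivity)
    have d1 : (j : ℕ) + 1 < (i : ℕ) + 2 := by exact_mod_cast c1
    have d2 : (i : ℕ) + 1 < (j : ℕ) + 2 := by exact_mod_cast c2
    exact Fin.ext (by omega)
  have hwP : ∀ j, w j ∈ P ∧ squareIndex θ (w j) ∉ C := by
    intro j
    rcases Relation.ReflTransGen.cases_tail (hw1 j) with h | ⟨c, _, h⟩
    · have := hw3 j
      rw [h, dist_self] at this
      have : 0 < 2 * r * ((j : ℕ) + 1 : ℝ) := by positivity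
      linarith
    · exact ⟨h.1.1, h.2⟩
  set t : Finset (ℤ × ℤ) := steps.image (squareIndex θ z + ·)
  have htcard : t.card ≤ 9 := Finset.card_image_le.trans card_steps.le
  obtain ⟨q, -, hq⟩ := Finset.exists_lt_card_fiber_of_mul_lt_card_of_maps_to
    (s := Finset.univ) (t := t) (f := fun j => squareIndex θ (w j)) (n := k)
    (fun j _ => by
      have h := squareIndex_near hθ (hw4 j)
      refine Finset.mem_image.2 ⟨squareIndex θ (w j) - squareIndex θ z, ?_, by simp⟩
      simp only [abs_le] at h
      simp only [steps, Finset.mem_product, Finset.mem_insert, Finset.mem_singleton, Prod.fst_sub,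
        Prod.snd_sub]
      omega)
    (by
      rw [Finset.card_univ, Fintype.card_fin]
      exact Nat.lt_succ_of_le (Nat.mul_le_mul_right k htcard))
  obtain ⟨J, hJ, hJcard⟩ := Finset.exists_subset_card_eq hq.le
  have hJq : ∀ j ∈ J, squareIndex θ (w j) = q := fun j hj => (Finset.mem_filter.1 (hJ hj)).2
  obtain ⟨j0, hj0⟩ := Finset.card_pos.1 (lt_of_le_of_lt (Nat.zero_le k) hq)
  have hj0q : squareIndex θ (w j0) = q := (Finset.mem_filter.1 hj0).2
  have hnear := squareIndex_near hθ (hw4 j0)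
  rw [hj0q] at hnear
  refine hC q hnear.1 hnear.2 (hj0q ▸ (hwP j0).2) ⟨J.image w, ?_, ?_⟩
  · intro x hx
    obtain ⟨j, hj, rfl⟩ := Finset.mem_image.1 (Finset.mem_coe.1 hx)
    exact ⟨(hwP j).1, hJq j hj ▸ mem_stdSquare_squareIndex hθ (w j)⟩
  · rw [Finset.card_image_of_injective _ hinj, hJcard]

lemma isBounded_squareIndex_preimage {θ : ℝ} (hθ : 0 < θ) {C : Set (ℤ × ℤ)} (hC : C.Finite) :
    Bornology.IsBounded {z : ℂ | squareIndex θ z ∈ C} := by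
  have hsub : {z : ℂ | squareIndex θ z ∈ C} ⊆ ⋃ q ∈ C, stdSquare θ q := by
    intro z hz
    exact Set.mem_biUnion hz (mem_stdSquare_squareIndex hθ z)
  refine Bornology.IsBounded.subset ((Bornology.isBounded_biUnion hC).2 fun q _ => ?_) hsub
  have : stdSquare θ q =
      Set.Icc (q.1 * θ) ((q.1 + 1) * θ) ×ℂ Set.Icc (q.2 * θ) ((q.2 + 1) * θ) := by
    ext z
    simp [stdSquare, Complex.mem_reProdIm, and_assoc]
  rw [this]
  exact (Metric.isBounded_Icc _ _).reProdIm (Metric.isBounded_Icc _ _)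

/-- If `r` is small and the configuration is locally finite, an infinite cluster forces an
unbounded connected component of squares containing at least `k` points. -/
lemma exists_unbounded_crowded {P : Set ℂ} {θ r : ℝ} {k : ℕ} (hθ : 0 < θ) (hr : 0 < r)
    (hrk : 2 * r * (9 * k + 2) ≤ θ)
    (hlf : ∀ B : Set ℂ, Bornology.IsBounded B → (P ∩ B).Finite)
    (hinf : hasInfiniteCluster P r) :
    ∃ p, p ∈ {p | hasAtLeast k (P ∩ stdSquare θ p)} ∧ ∀ n : ℕ, ∃ q,
      (touchGraph {p | hasAtLeast k (P ∩ stdSquare θ p)}).Reachable p q ∧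
        ((n : ℤ) ≤ |q.1 - p.1| ∨ (n : ℤ) ≤ |q.2 - p.2|) := by
  by_contra hcon
  push Not at hcon
  set O : Set (ℤ × ℤ) := {p | hasAtLeast k (P ∩ stdSquare θ p)} with hO
  have hfinO : ∀ p ∈ O, {q | (touchGraph O).Reachable p q}.Finite := by
    intro p hp
    obtain ⟨n, hn⟩ := hcon p hp
    refine (Set.finite_Icc (p.1 - n, p.2 - n) (p.1 + n, p.2 + n)).subset fun q hq => ?_
    have := hn q hq
    simp only [abs_lt] at this
    simp only [Set.mem_Icc, Prod.le_def]
    omega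
  obtain ⟨x, hx, hxinf⟩ := hinf
  refine hxinf ?_
  set p0 := squareIndex θ x
  set N : Set (ℤ × ℤ) := {q | q ∈ O ∧ |p0.1 - q.1| ≤ 1 ∧ |p0.2 - q.2| ≤ 1}
  have hNfin : N.Finite := by
    refine (Set.finite_Icc (p0.1 - 1, p0.2 - 1) (p0.1 + 1, p0.2 + 1)).subset fun q hq => ?_
    have := hq.2
    simp only [abs_le] at this
    simp only [Set.mem_Icc, Prod.le_def]
    omega
  -- The square of `x` together with all crowded components touching it.
  set C : Set (ℤ × ℤ) := {p0} ∪ ⋃ q ∈ N, {q' | (touchGraph O).Reachable q q'} with hCdef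
  have hCfin : C.Finite := (Set.finite_singleton _).union (hNfin.biUnion fun q hq => hfinO q hq.1)
  have hCstep : ∀ u ∈ C, ∀ v ∈ O, |u.1 - v.1| ≤ 1 → |u.2 - v.2| ≤ 1 → v ∈ C := by
    rintro u (rfl | hu) v hv h1 h2
    · exact Or.inr (Set.mem_biUnion (show v ∈ N from ⟨hv, h1, h2⟩) (SimpleGraph.Reachable.refl v))
    · obtain ⟨q, hq, hqu⟩ := Set.mem_iUnion₂.1 hu
      exact Or.inr (Set.mem_biUnion hq (touchGraph_reachable_step hq.1 hqu hv h1 h2))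
  have hcover : ∀ y, Relation.ReflTransGen (boolStep P r) x y → y ∈ P ∧
      ∃ z, squareIndex θ z ∈ C ∧ Relation.ReflTransGen
        (fun a b => boolStep P r a b ∧ squareIndex θ b ∉ C) z y := by
    intro y hy
    induction hy with
    | refl => exact ⟨hx, x, Or.inl rfl, Relation.ReflTransGen.refl⟩
    | @tail u v _ huv ih =>
      refine ⟨huv.1, ?_⟩
      by_cases hv : squareIndex θ v ∈ C
      · exact ⟨v, hv, Relation.ReflTransGen.refl⟩
      · obtain ⟨-, z, hz, hzu⟩ := ih
        exact ⟨z, hz, hzu.tail ⟨huv, hv⟩⟩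
  refine (hlf _ ((isBounded_squareIndex_preimage hθ hCfin).thickening (δ := θ))).subset
    fun y hy => ?_
  obtain ⟨hyP, z, hz, hzy⟩ := hcover y (boolConn_iff.1 hy).2
  refine ⟨hyP, Metric.mem_thickening_iff.2 ⟨z, hz, ?_⟩⟩
  exact dist_lt_of_sparse hθ hr hrk (fun q h1 h2 hq hk => hq (hCstep _ hz q hk h1 h2)) hzy

/-- If the edge-connected component of `0` among the nonempty squares is infinite, the Boolean
model with radius `2 θ` has an infinite cluster: points in squares sharing an edge are at distance
at most `3 θ`. -/
lemma hasInfiniteCluster_of_infinite {P : Set ℂ} {θ : ℝ} (hθ : 0 < θ)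
    (h0 : (0, 0) ∉ {p | P ∩ stdSquare θ p = ∅})
    (hinf : {q | Relation.ReflTransGen (edgeStep {p | P ∩ stdSquare θ p = ∅}) (0, 0) q}.Infinite) :
    hasInfiniteCluster P (2 * θ) := by
  obtain ⟨x, hxP, hx⟩ := Set.nonempty_iff_ne_empty.2 h0
  refine ⟨x, hxP, fun hfin => hinf ?_⟩
  have hdist : ∀ u v : ℤ × ℤ, (edgeAdj u v ∨ u = v) → ∀ a ∈ stdSquare θ u, ∀ b ∈ stdSquare θ v,
      dist a b < 2 * (2 * θ) := by
    rintro ⟨u1, u2⟩ ⟨v1, v2⟩ huv a ⟨a1, a2, a3, a4⟩ b ⟨b1, b2, b3, b4⟩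
    rw [Complex.dist_eq]
    refine (Complex.norm_le_abs_re_add_abs_im _).trans_lt ?_
    simp only at a1 a2 a3 a4 b1 b2 b3 b4
    have : |(a - b).re| + |(a - b).im| ≤ 3 * θ := by
      rw [Complex.sub_re, Complex.sub_im]
      rcases huv with (⟨h1, h2⟩ | ⟨h1, h2⟩ | ⟨h1, h2⟩ | ⟨h1, h2⟩) | h
      all_goals
        first
        | (simp only at h1 h2
           subst h1 h2)
        | (obtain ⟨rfl, rfl⟩ := Prod.mk.inj h)
        push_cast at *
        rcases abs_cases (a.re - b.re) with ⟨e1, _⟩ | ⟨e1, _⟩ <;>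
        rcases abs_cases (a.im - b.im) with ⟨e2, _⟩ | ⟨e2, _⟩ <;>
        rw [e1, e2] <;> linarith
    linarith
  have hconn : ∀ q, Relation.ReflTransGen (edgeStep {p | P ∩ stdSquare θ p = ∅}) (0, 0) q →
      ∃ y ∈ stdSquare θ q, Relation.ReflTransGen (boolStep P (2 * θ)) x y := by
    intro q hq
    induction hq with
    | refl => exact ⟨x, hx, Relation.ReflTransGen.refl⟩
    | @tail u v _ huv ih =>
      obtain ⟨y, hy, hxy⟩ := ih
      obtain ⟨y', hyP, hy'⟩ := Set.nonempty_iff_ne_empty.2 huv.2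
      exact ⟨y', hy', hxy.tail ⟨hyP, hdist u v (Or.inl huv.1) y hy y' hy'⟩⟩
  obtain ⟨R, hR⟩ := hfin.isBounded.exists_norm_le
  refine (Set.finite_Icc (⌊-R / θ⌋ - 1, ⌊-R / θ⌋ - 1) (⌈R / θ⌉, ⌈R / θ⌉)).subset fun q hq => ?_
  obtain ⟨y, ⟨h1, h2, h3, h4⟩, hy⟩ := hconn q hq
  have hyR := hR y (boolConn_iff.2 ⟨hxP, hy⟩)
  have hre := abs_le.1 ((Complex.abs_re_le_norm y).trans hyR)
  have him := abs_le.1 ((Complex.abs_im_le_norm y).trans hyR)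
  have upper : ∀ m : ℤ, m * θ ≤ R → m ≤ ⌈R / θ⌉ := by
    intro m hm
    have : (m : ℝ) ≤ ⌈R / θ⌉ := ((le_div_iff₀ hθ).2 hm).trans (Int.le_ceil _)
    exact_mod_cast this
  have lower : ∀ m : ℤ, -R ≤ (m + 1) * θ → ⌊-R / θ⌋ - 1 ≤ m := by
    intro m hm
    have : (⌊-R / θ⌋ : ℝ) ≤ m + 1 := (Int.floor_le _).trans ((div_le_iff₀ hθ).2 hm)
    have : ⌊-R / θ⌋ ≤ m + 1 := by exact_mod_cast this
    omega
  exact ⟨⟨lower _ (by linarith), lower _ (by linarith)⟩,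
    ⟨upper _ (by linarith), upper _ (by linarith)⟩⟩

/-! ### The two phases -/

lemma ofReal_exp_le {c : ℝ} (hc : Real.log 90 ≤ c) (n : ℕ) :
    ENNReal.ofReal (Real.exp (-c * n)) ≤ ENNReal.ofReal (1 / 90) ^ n := by
  rw [← ENNReal.ofReal_pow (by norm_num)]
  refine ENNReal.ofReal_le_ofReal ?_
  rw [mul_comm, Real.exp_nat_mul]
  refine pow_le_pow_left₀ (Real.exp_pos _).le ?_ n
  rw [Real.exp_neg, one_div]
  refine inv_anti₀ (by norm_num) ?_
  rw [← Real.exp_log (show (0 : ℝ) < 90 by norm_num)]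
  exact Real.exp_le_exp.2 hc

lemma nine_mul_ofReal : 9 * ENNReal.ofReal (1 / 90) = ENNReal.ofReal (1 / 10) := by
  rw [show (9 : ENNReal) = ENNReal.ofReal 9 by simp, ← ENNReal.ofReal_mul (by norm_num)]
  norm_num

/-- Subcritical phase: for small radii there is almost surely no infinite cluster. -/
lemma subcritical {Ω : Type*} [MeasurableSpace Ω] (μ : Measure Ω) (X : Ω → Set ℂ)
    (hlf : ∀ᵐ ω ∂μ, ∀ B : Set ℂ, Bornology.IsBounded B → (X ω ∩ B).Finite)
    {θ : ℝ} (hθ : 0 < θ) (k : ℕ)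
    (hF : ∀ s : Finset (ℤ × ℤ), 0 < s.card → IsConnected (squaresUnion θ s) →
      μ {ω | ∀ p ∈ s, hasAtLeast k (X ω ∩ stdSquare θ p)} ≤ ENNReal.ofReal (1 / 90) ^ s.card)
    {r : ℝ} (hr : 0 < r) (hrk : 2 * r * (9 * k + 2) ≤ θ) :
    μ {ω | hasInfiniteCluster (X ω) r} = 0 := by
  set O : Ω → Set (ℤ × ℤ) := fun ω => {p | hasAtLeast k (X ω ∩ stdSquare θ p)}
  have hnull : ∀ p : ℤ × ℤ, μ {ω | p ∈ O ω ∧ ∀ n : ℕ, ∃ q, (touchGraph (O ω)).Reachable p q ∧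
      ((n : ℤ) ≤ |q.1 - p.1| ∨ (n : ℤ) ≤ |q.2 - p.2|)} = 0 := by
    intro p
    have hle : ∀ n : ℕ, μ {ω | p ∈ O ω ∧ ∀ n : ℕ, ∃ q, (touchGraph (O ω)).Reachable p q ∧
        ((n : ℤ) ≤ |q.1 - p.1| ∨ (n : ℤ) ≤ |q.2 - p.2|)} ≤ ENNReal.ofReal (1 / 10) ^ (n + 1) := by
      intro n
      have := measure_connection_le μ O hθ _ hF p n.succ_pos
      rw [nine_mul_ofReal] at this
      refine le_trans (measure_mono fun ω hω => ?_) this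
      exact ⟨hω.1, hω.2 (n + 1)⟩
    have hlim : Tendsto (fun n : ℕ => ENNReal.ofReal (1 / 10) ^ (n + 1)) atTop (nhds 0) :=
      (tendsto_add_atTop_iff_nat 1).2
        (ENNReal.tendsto_pow_atTop_nhds_zero_of_lt_one (by
          rw [ENNReal.ofReal_lt_one]
          norm_num))
    exact le_antisymm (ge_of_tendsto' hlim hle) zero_le
  have hall := measure_iUnion_null hnull
  rw [ae_iff] at hlf
  refine measure_mono_null (fun ω hω => ?_) (measure_union_null hlf hall)
  by_cases hω' : ∀ B : Set ℂ, Bornology.IsBounded B → (X ω ∩ B).Finite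
  · obtain ⟨p, hp⟩ := exists_unbounded_crowded hθ hr hrk hω' hω
    exact Or.inr (Set.mem_iUnion.2 ⟨p, hp⟩)
  · exact Or.inl hω'

/-- Supercritical phase: for radius `2 θ` there is an infinite cluster with positive
probability. -/
lemma supercritical {Ω : Type*} [MeasurableSpace Ω] (μ : Measure Ω) [IsProbabilityMeasure μ]
    (X : Ω → Set ℂ) {θ : ℝ} (hθ : 0 < θ)
    (hF : ∀ s : Finset (ℤ × ℤ), 0 < s.card → IsConnected (squaresUnion θ s) →
      μ {ω | ∀ p ∈ s, X ω ∩ stdSquare θ p = ∅} ≤ ENNReal.ofReal (1 / 90) ^ s.card) :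
    0 < μ {ω | hasInfiniteCluster (X ω) (2 * θ)} := by
  set E : Ω → Set (ℤ × ℤ) := fun ω => {p | X ω ∩ stdSquare θ p = ∅} with hE
  set D : Set Ω := {ω | ((0 : ℤ), (0 : ℤ)) ∈ E ω} with hD
  set H : ℕ → Set Ω := fun n => {ω | (((n + 1 : ℕ) : ℤ), (0 : ℤ)) ∈ E ω ∧
    ∃ q, (touchGraph (E ω)).Reachable (((n + 1 : ℕ) : ℤ), (0 : ℤ)) q ∧
      (((n + 1 : ℕ) : ℤ) ≤ |q.1 - ((n + 1 : ℕ) : ℤ)| ∨ ((n + 1 : ℕ) : ℤ) ≤ |q.2 - 0|)} with hH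
  have hDle : μ D ≤ ENNReal.ofReal (1 / 90) := by
    have := hF {(0, 0)} (by simp) (by simpa [squaresUnion] using stdSquare_isConnected hθ (0, 0))
    simpa [hD, hE] using this
  have hHle : ∀ n, μ (H n) ≤ ENNReal.ofReal (1 / 10) * ENNReal.ofReal (1 / 10) ^ n := by
    intro n
    have := measure_connection_le μ E hθ _ hF (((n + 1 : ℕ) : ℤ), (0 : ℤ)) n.succ_pos
    rwa [nine_mul_ofReal, pow_succ'] at this
  have hcover : (Set.univ : Set Ω) ⊆
      {ω | hasInfiniteCluster (X ω) (2 * θ)} ∪ (D ∪ ⋃ n, H n) := by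
    intro ω _
    by_cases h0 : ((0 : ℤ), (0 : ℤ)) ∈ E ω
    · exact Or.inr (Or.inl h0)
    by_cases hfin : {q | Relation.ReflTransGen (edgeStep (E ω)) (0, 0) q}.Finite
    · obtain ⟨n, hn, hnE, q, hq, hqn⟩ := exists_blocking_connection h0 hfin
      obtain ⟨m, rfl⟩ := Nat.exists_eq_add_of_lt hn
      rw [zero_add] at hnE hq hqn
      exact Or.inr (Or.inr (Set.mem_iUnion.2 ⟨m, hnE, q, hq, Or.inl hqn⟩))
    · exact Or.inl (hasInfiniteCluster_of_infinite hθ h0 hfin)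
  have hsum : ∑' n, μ (H n) ≤ ENNReal.ofReal (1 / 9) := by
    refine (ENNReal.tsum_le_tsum hHle).trans ?_
    rw [ENNReal.tsum_mul_left, ENNReal.tsum_geometric, ← ENNReal.ofReal_one,
      ← ENNReal.ofReal_sub _ (by norm_num), ← ENNReal.ofReal_inv_of_pos (by norm_num),
      ← ENNReal.ofReal_mul (by norm_num)]
    exact ENNReal.ofReal_le_ofReal (by norm_num)
  by_contra hcon
  have hzero : μ {ω | hasInfiniteCluster (X ω) (2 * θ)} = 0 := by simpa using hcon
  have h1 : (1 : ENNReal) ≤ ENNReal.ofReal (1 / 90) + ENNReal.ofReal (1 / 9) := by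
    calc (1 : ENNReal) = μ Set.univ := measure_univ.symm
      _ ≤ μ {ω | hasInfiniteCluster (X ω) (2 * θ)} + (μ D + ∑' n, μ (H n)) :=
        (measure_mono hcover).trans ((measure_union_le _ _).trans
          (add_le_add le_rfl ((measure_union_le _ _).trans
            (add_le_add le_rfl (measure_iUnion_le _)))))
      _ ≤ _ := by
        rw [hzero, zero_add]
        exact add_le_add hDle hsum
  rw [← ENNReal.ofReal_add (by norm_num) (by norm_num)] at h1
  refine absurd h1 (not_le.2 ?_)
  rw [ENNReal.ofReal_lt_one]
  norm_num

/-- General criterion for a non-trivial critical radius: if hole probabilities and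
overcrowding probabilities of connected unions of `L` standard squares decay
exponentially in `L` (with the right dependence on the side length `θ` and on `k`),
then the Boolean model on the a.s. locally finite random point configuration `X` has a
non-trivial critical radius. -/
theorem critical_radius_criterion
    {Ω : Type*} [MeasurableSpace Ω] (μ : Measure Ω) [IsProbabilityMeasure μ]
    (X : Ω → Set ℂ)
    (hlf : ∀ᵐ ω ∂μ, ∀ B : Set ℂ, Bornology.IsBounded B → (X ω ∩ B).Finite)
    (h1 : ∃ θ₁ > (0:ℝ), ∃ c₁ : ℝ → ℝ, Tendsto c₁ atTop atTop ∧
      ∀ θ ≥ θ₁, ∀ L : ℕ, 0 < L → ∀ s : Finset (ℤ × ℤ), s.card = L →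
        IsConnected (squaresUnion θ s) →
        μ {ω | X ω ∩ squaresUnion θ s = ∅} ≤ ENNReal.ofReal (Real.exp (-(c₁ θ) * L)))
    (h2 : ∃ θ₂ > (0:ℝ), ∃ c₂ : ℝ → ℕ → ℝ,
      (∀ M > (0:ℝ), ∃ θM : ℝ, ∀ θ ≥ θM, ∃ kM : ℕ, ∀ k ≥ kM, M ≤ c₂ θ k) ∧
      ∀ θ ≥ θ₂, ∀ k : ℕ, ∀ L : ℕ, 0 < L → ∀ s : Finset (ℤ × ℤ), s.card = L →
        IsConnected (squaresUnion θ s) →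
        μ {ω | ∀ p ∈ s, hasAtLeast k (X ω ∩ stdSquare θ p)} ≤
          ENNReal.ofReal (Real.exp (-(c₂ θ k) * L))) :
    ∃ rc : ℝ, 0 < rc ∧
      (∀ r : ℝ, 0 < r → r < rc → μ {ω | hasInfiniteCluster (X ω) r} = 0) ∧
      (∀ r : ℝ, rc < r → 0 < μ {ω | hasInfiniteCluster (X ω) r}) := by
  obtain ⟨r₁, hr₁⟩ : ∃ r₁ : ℝ, 0 < μ {ω | hasInfiniteCluster (X ω) r₁} := by
    obtain ⟨θ₁, hθ₁, c₁, hc₁, h⟩ := h1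
    obtain ⟨θ, hθ, hcθ⟩ := ((eventually_ge_atTop θ₁).and
      (hc₁.eventually (eventually_ge_atTop (Real.log 90)))).exists
    refine ⟨2 * θ, supercritical μ X (hθ₁.trans_le hθ) fun s hs hconn => ?_⟩
    refine le_trans (measure_mono fun ω hω => ?_)
      ((h θ hθ s.card hs s rfl hconn).trans (ofReal_exp_le hcθ _))
    simpa [squaresUnion, Set.inter_iUnion] using hω
  obtain ⟨r₀, hr₀, hsub⟩ : ∃ r₀ > (0 : ℝ), ∀ r, 0 < r → r ≤ r₀ →
      μ {ω | hasInfiniteCluster (X ω) r} = 0 := by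
    obtain ⟨θ₂, hθ₂, c₂, hc₂, h⟩ := h2
    obtain ⟨θM, hθM⟩ := hc₂ (Real.log 90) (Real.log_pos (by norm_num))
    obtain ⟨k, hk⟩ := hθM (max θM θ₂) (le_max_left _ _)
    have hθ : 0 < max θM θ₂ := hθ₂.trans_le (le_max_right _ _)
    have hpos : (0 : ℝ) < 2 * (9 * k + 2) := by positivity
    refine ⟨max θM θ₂ / (2 * (9 * k + 2)), by positivity, fun r hr hr' => ?_⟩
    refine subcritical μ X hlf hθ k (fun s hs hconn => ?_) hr ?_
    · exact (h _ (le_max_right _ _) k s.card hs s rfl hconn).trans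
        (ofReal_exp_le (hk k le_rfl) _)
    · rw [le_div_iff₀ hpos] at hr'
      linarith
  have hmono : ∀ r s : ℝ, r ≤ s →
      μ {ω | hasInfiniteCluster (X ω) r} ≤ μ {ω | hasInfiniteCluster (X ω) s} :=
    fun r s hrs => measure_mono fun ω hω => hasInfiniteCluster_mono hrs hω
  set S : Set ℝ := {r | μ {ω | hasInfiniteCluster (X ω) r} = 0} with hS
  have hbdd : BddAbove S := by
    refine ⟨r₁, fun r hr => ?_⟩
    by_contra hlt
    have := hmono r₁ r (not_le.1 hlt).le
    rw [show μ {ω | hasInfiniteCluster (X ω) r} = 0 from hr] at this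
    exact absurd hr₁ (not_lt.2 this)
  have hr₀S : r₀ ∈ S := hsub r₀ hr₀ le_rfl
  refine ⟨sSup S, hr₀.trans_le (le_csSup hbdd hr₀S), fun r _ hr => ?_, fun r hr => ?_⟩
  · obtain ⟨s, hs, hrs⟩ := exists_lt_of_lt_csSup ⟨r₀, hr₀S⟩ hr
    exact le_antisymm ((hmono r s hrs.le).trans (le_of_eq hs)) zero_le
  · refine pos_iff_ne_zero.2 fun h => ?_
    exact absurd (le_csSup hbdd (show r ∈ S from h)) (not_le.2 hr)
end

section
/- Proposition (lattice paths yield continuum paths): Let r > 0 and let the base length be θ = r/√5. Let P ⊆ ℝ² be any set. Suppose that for some positive integer L there exists a non-repeating lattice path Γ = (X_1, …, X_n) of standard squares of side θ that connects the origin to W_{Lθ}, such that each X_i contains at least one point of P. Then there exists a continuum path γ with vertices in P (for the radius r) that connects the origin to W_{Lθ}. -/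
/-!
Choose a point of `P` in each square of `Γ`. With `θ = r / √5`, two points of one square are at
distance at most `√2 θ < r`, and two points of neighbouring squares, whose coordinates differ by
at most `2θ`, are at distance at most `2√2 θ < 2r`. So the chosen points form a continuum path,
and its disks cover `V(Γ)`: in particular the origin and a point of `W_{Lθ}`.
-/

open MeasureTheory ProbabilityTheory Filter

/-- Two standard squares (of side `θ`) are neighbours: they are distinct and their
boundaries intersect. -/
def sqNbr (θ : ℝ) (p q : ℤ × ℤ) : Prop :=
  p ≠ q ∧ (frontier (stdSquare θ p) ∩ frontier (stdSquare θ q)).Nonempty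

/-- `V(Γ)`: the union of the standard squares of a lattice path `Γ`. -/
def latticeV (θ : ℝ) (Γ : List (ℤ × ℤ)) : Set ℂ := ⋃ p ∈ Γ, stdSquare θ p

/-- `W_R = {x ∈ ℝ² : ‖x‖_∞ = R}`, identifying `ℝ²` with `ℂ`. -/
def Wbox (R : ℝ) : Set ℂ := {z : ℂ | max |z.re| |z.im| = R}

/-- `S(γ)`: the union of the open Euclidean disks of radius `r` around the vertices of a
continuum path `γ`. -/
def contS (r : ℝ) (γ : List ℂ) : Set ℂ := ⋃ x ∈ γ, Metric.ball x r

lemma isClosed_stdSquare (θ : ℝ) (p : ℤ × ℤ) : IsClosed (stdSquare θ p) := by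
  unfold stdSquare
  exact (isClosed_le continuous_const Complex.continuous_re).inter
    ((isClosed_le Complex.continuous_re continuous_const).inter
      ((isClosed_le continuous_const Complex.continuous_im).inter
        (isClosed_le Complex.continuous_im continuous_const)))

lemma dist_lt_of_abs_le {k r : ℝ} (hk : 0 < k) (hr : 0 < r) {x y : ℂ}
    (hre : |x.re - y.re| ≤ k * (r / √5)) (him : |x.im - y.im| ≤ k * (r / √5)) :
    dist x y < k * r := by
  have h1 := sq_le_sq' (abs_le.mp hre).1 (abs_le.mp hre).2
  have h2 := sq_le_sq' (abs_le.mp him).1 (abs_le.mp him).2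
  have h3 : (k * (r / √5)) ^ 2 = (k * r) ^ 2 / 5 := by
    rw [← mul_div_assoc, div_pow, Real.sq_sqrt (by norm_num)]
  have h4 : 0 < (k * r) ^ 2 := by positivity
  rw [Complex.dist_eq_re_im, Real.sqrt_lt' (by positivity)]
  linarith

lemma abs_sub_le_of_mem_stdSquare {θ : ℝ} {p : ℤ × ℤ} {x y : ℂ}
    (hx : x ∈ stdSquare θ p) (hy : y ∈ stdSquare θ p) :
    |x.re - y.re| ≤ θ ∧ |x.im - y.im| ≤ θ := by
  obtain ⟨a, b, c, d⟩ := hx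
  obtain ⟨a', b', c', d'⟩ := hy
  constructor <;> rw [abs_le] <;> constructor <;> linarith

lemma dist_lt_of_mem_stdSquare {r : ℝ} (hr : 0 < r) {p : ℤ × ℤ} {x y : ℂ}
    (hx : x ∈ stdSquare (r / √5) p) (hy : y ∈ stdSquare (r / √5) p) : dist x y < r := by
  obtain ⟨h1, h2⟩ := abs_sub_le_of_mem_stdSquare hx hy
  simpa using dist_lt_of_abs_le one_pos hr (by simpa using h1) (by simpa using h2)

/-- Neighbouring squares share a point `z`, so the coordinates of `x` and `y` differ by at
most `2θ`. -/
lemma dist_lt_of_sqNbr {r : ℝ} (hr : 0 < r) {p q : ℤ × ℤ} (h : sqNbr (r / √5) p q) {x y : ℂ}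
    (hx : x ∈ stdSquare (r / √5) p) (hy : y ∈ stdSquare (r / √5) q) : dist x y < 2 * r := by
  obtain ⟨-, z, hzp, hzq⟩ := h
  obtain ⟨h1, h2⟩ :=
    abs_sub_le_of_mem_stdSquare hx ((isClosed_stdSquare _ _).frontier_subset hzp)
  obtain ⟨h3, h4⟩ :=
    abs_sub_le_of_mem_stdSquare ((isClosed_stdSquare _ _).frontier_subset hzq) hy
  refine dist_lt_of_abs_le two_pos hr ?_ ?_
  · linarith [abs_sub_le x.re z.re y.re]
  · linarith [abs_sub_le x.im z.im y.im]

/-- Lattice paths yield continuum paths: with base length `θ = r/√5`, if a non-repeating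
lattice path of standard squares connects the origin to `W_{Lθ}` and each of its squares
contains a point of `P`, then some continuum path with vertices in `P` (radius `r`)
connects the origin to `W_{Lθ}`. -/
theorem lattice_path_to_continuum_path
    (r : ℝ) (hr : 0 < r) (P : Set ℂ) (L : ℕ) (hL : 0 < L)
    (Γ : List (ℤ × ℤ)) (hne : Γ ≠ [])
    (hchain : Γ.Chain' (sqNbr (r / Real.sqrt 5)))
    (hnodup : Γ.Nodup)
    (h0 : (0 : ℂ) ∈ latticeV (r / Real.sqrt 5) Γ)
    (hW : (latticeV (r / Real.sqrt 5) Γ ∩ Wbox (L * (r / Real.sqrt 5))).Nonempty)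
    (hpts : ∀ p ∈ Γ, (P ∩ stdSquare (r / Real.sqrt 5) p).Nonempty) :
    ∃ γ : List ℂ, γ ≠ [] ∧ (∀ x ∈ γ, x ∈ P) ∧
      γ.Chain' (fun x y => dist x y < 2 * r) ∧
      (0 : ℂ) ∈ contS r γ ∧ (contS r γ ∩ Wbox (L * (r / Real.sqrt 5))).Nonempty := by
  choose! f hf using hpts
  -- Every point of `V(Γ)` is within distance `r` of the vertex chosen in its square.
  have hcov : latticeV (r / √5) Γ ⊆ contS r (Γ.map f) := by
    intro z hz
    simp only [latticeV, Set.mem_iUnion] at hz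
    obtain ⟨p, hp, hzp⟩ := hz
    simp only [contS, Set.mem_iUnion]
    exact ⟨f p, List.mem_map_of_mem hp, dist_lt_of_mem_stdSquare hr hzp (hf p hp).2⟩
  refine ⟨Γ.map f, by simpa using hne, ?_, ?_, hcov h0,
    hW.mono (Set.inter_subset_inter_left _ hcov)⟩
  · intro x hx
    obtain ⟨p, hp, rfl⟩ := List.mem_map.mp hx
    exact (hf p hp).1
  · refine (List.isChain_map f).mpr ?_
    rw [List.isChain_iff_getElem]
    intro i hi
    exact dist_lt_of_sqNbr hr (List.isChain_iff_getElem.mp hchain i hi) (hf _ (List.getElem_mem _)).2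
      (hf _ (List.getElem_mem _)).2
end

section
/- Proposition (continuum paths yield k-full lattice paths): Fix a base length θ > 0 and an integer k ≥ 1, and let r satisfy 0 < r < θ/(18k). Let P ⊆ ℝ² be a locally finite set. If for some positive integer L there exists a continuum path with vertices in P (for the radius r) connecting the origin to W_{Lθ}, then there exists a non-repeating lattice path of standard squares of side θ connecting the origin to W_{Lθ} such that each standard square of this lattice path contains at least k points of P. -/
/-!
The scale `4θ/9` drives the argument. Let `y` be a point of `S(γ)`. The path has a vertex within
`r` of `y`, and, since `0` and `W_{Lθ}` are at distance at least `θ`, also a vertex at distance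
more than `θ/2 - r > 4θ/9` from `y`. As consecutive vertices are less than `2r` apart, each of the
`4k` half-open annuli `[(2j-1)r, (2j+1)r)`, `j < 4k`, around `y` contains a vertex, so at least
`4k` points of `P` lie within `4θ/9` of `y` (`exists_many_points`).

Let `v(y)` be a lattice vertex nearest to `y` (`nearestVertex`). If `y'` is within `r < θ/18` of
`y`, then every point within `4θ/9` of `y` is, in each coordinate, at distance less than
`θ/2 + 4θ/9 + θ/18 = θ` from both `v(y)` and `v(y')`. Hence these `4k` points lie in at most four
squares, each having both `v(y)` and `v(y')` as corners, and one of these squares contains `k` of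
them (`exists_common_full`).

Full squares sharing a corner are equal or neighbours. Therefore all full squares around `v(y)` and
around `v(y')` lie in one component of the graph of full squares (`Linked`). Moving along the path
in steps shorter than `r` (through midpoints of consecutive vertices) links `0` to a point
`w ∈ S(γ) ∩ W_{Lθ}`. Every square around `v(0) = 0` contains the origin, and `v(w) ∈ W_{Lθ}`, so a
simple path in the graph of full squares is the required lattice path.
-/

open MeasureTheory ProbabilityTheory Filter

/-! ### Chains of points -/

/-- A partial equivalence relation that holds between the `R`-related members of an `R`-chain holds
between any two members. -/
lemma chain_linked {α : Type*} {R E : α → α → Prop} (hs : ∀ x y, E x y → E y x)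
    (ht : ∀ x y z, E x y → E y z → E x z) :
    ∀ l : List α, l.IsChain R → (∀ x ∈ l, E x x) → (∀ x ∈ l, ∀ y ∈ l, R x y → E x y) →
      ∀ x ∈ l, ∀ y ∈ l, E x y := by
  intro l
  induction l with
  | nil => intro _ _ _ x hx; simp at hx
  | cons a l ih =>
    intro hc hrefl hR
    have hl := ih hc.tail (fun x hx => hrefl x (List.mem_cons_of_mem _ hx))
      (fun x hx y hy => hR x (List.mem_cons_of_mem _ hx) y (List.mem_cons_of_mem _ hy))
    have ha : ∀ y ∈ l, E a y := by
      intro y hy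
      cases l with
      | nil => simp at hy
      | cons b l =>
        rw [List.isChain_cons_cons] at hc
        exact ht _ b _ (hR a (by simp) b (by simp) hc.1) (hl b (by simp) y hy)
    intro x hx y hy
    rcases List.mem_cons.1 hx with rfl | hxl <;> rcases List.mem_cons.1 hy with rfl | hyl
    · exact hrefl _ (by simp)
    · exact ha y hyl
    · exact hs _ _ (ha x hxl)
    · exact hl x hxl y hyl

/-- Discrete intermediate value theorem: along a chain whose steps change the distance to `y` by
less than `2r`, no half-open window of length `2r` between two attained distances is jumped over. -/
lemma exists_mem_window {r : ℝ} {γ : List ℂ} (hchain : γ.IsChain (fun x y => dist x y < 2 * r))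
    (y : ℂ) {a b : ℂ} (ha : a ∈ γ) (hb : b ∈ γ) (c : ℝ) (hac : dist a y < c + 2 * r)
    (hbc : c ≤ dist b y) : ∃ z ∈ γ, c ≤ dist z y ∧ dist z y < c + 2 * r := by
  by_contra! hcon
  have h := chain_linked (E := fun x x' => dist x y < c ↔ dist x' y < c)
    (fun _ _ h => h.symm) (fun _ _ _ h h' => h.trans h') γ hchain (fun _ _ => Iff.rfl)
    (by
      intro x hx x' hx' hR
      have h1 := dist_triangle x x' y
      have h2 := dist_triangle x' x y
      rw [dist_comm x' x] at h2
      constructor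
      · intro hlt
        by_contra! hge
        linarith [hcon x' hx' hge]
      · intro hlt
        by_contra! hge
        linarith [hcon x hx hge]) a ha b hb
  by_cases hlt : dist a y < c
  · linarith [h.1 hlt]
  · linarith [hcon a ha (not_lt.1 hlt)]

/-- A chain with steps shorter than `2r` running from within `r` of `y` to distance at least
`ρ ≥ 2nr` from `y` has at least `n` distinct vertices at distance less than `ρ` from `y`. -/
lemma exists_many_points {r ρ : ℝ} (hr0 : 0 < r) {γ : List ℂ}
    (hchain : γ.IsChain (fun x y => dist x y < 2 * r)) (y : ℂ) {a b : ℂ} (ha : a ∈ γ)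
    (hb : b ∈ γ) (hay : dist a y < r) (n : ℕ) (hn : 2 * n * r ≤ ρ) (hby : ρ ≤ dist b y) :
    ∃ t : Finset ℂ, (∀ z ∈ t, z ∈ γ ∧ dist z y < ρ) ∧ t.card = n := by
  have key : ∀ j : Fin n, ∃ z ∈ γ, (2 * (j : ℝ) - 1) * r ≤ dist z y ∧
      dist z y < (2 * (j : ℝ) - 1) * r + 2 * r := by
    intro j
    have hj : ((j : ℕ) : ℝ) + 1 ≤ n := by exact_mod_cast j.2
    have hj0 : (0 : ℝ) ≤ (j : ℕ) := by positivity
    apply exists_mem_window hchain y ha hb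
    · nlinarith
    · nlinarith
  choose f hfγ hf1 hf2 using key
  have hinj : Function.Injective f := by
    intro i j hij
    have h1 := hf1 i
    have h2 := hf2 i
    rw [hij] at h1 h2
    have h3 := hf1 j
    have h4 := hf2 j
    have hlt : ∀ p q : ℕ, (2 * (p : ℝ) - 1) * r < (2 * (q : ℝ) - 1) * r + 2 * r → p ≤ q := by
      intro p q h
      have : (p : ℝ) < q + 1 := by
        by_contra! hc
        nlinarith
      have : p < q + 1 := by exact_mod_cast this
      omega
    exact Fin.ext (le_antisymm (hlt _ _ (by linarith)) (hlt _ _ (by linarith)))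
  refine ⟨Finset.univ.map ⟨f, hinj⟩, ?_, by simp⟩
  intro z hz
  obtain ⟨j, -, rfl⟩ := Finset.mem_map.1 hz
  refine ⟨hfγ j, ?_⟩
  have hj : ((j : ℕ) : ℝ) + 1 ≤ n := by exact_mod_cast j.2
  have := hf2 j
  simp only [Function.Embedding.coeFn_mk]
  nlinarith

/-! ### Squares around a lattice vertex -/

/-- The standard square `q` has the lattice vertex `(v.1 θ, v.2 θ)` as a corner. -/
def Around (v q : ℤ × ℤ) : Prop :=
  (v.1 - 1 ≤ q.1 ∧ q.1 ≤ v.1) ∧ (v.2 - 1 ≤ q.2 ∧ q.2 ≤ v.2)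

/-- The point of the plane with lattice coordinates `v`. -/
def latticePoint (θ : ℝ) (v : ℤ × ℤ) : ℂ := ⟨v.1 * θ, v.2 * θ⟩

/-- The lattice coordinates of a vertex of the `θ`-grid nearest to `y`. -/
noncomputable def nearestVertex (θ : ℝ) (y : ℂ) : ℤ × ℤ := (round (y.re / θ), round (y.im / θ))

lemma latticePoint_mem {θ : ℝ} (hθ : 0 < θ) {v q : ℤ × ℤ} (h : Around v q) :
    latticePoint θ v ∈ stdSquare θ q := by
  obtain ⟨⟨h1, h2⟩, h3, h4⟩ := h
  have h1' : (v.1 : ℝ) ≤ q.1 + 1 := by exact_mod_cast (by omega : v.1 ≤ q.1 + 1)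
  have h2' : (q.1 : ℝ) ≤ v.1 := by exact_mod_cast h2
  have h3' : (v.2 : ℝ) ≤ q.2 + 1 := by exact_mod_cast (by omega : v.2 ≤ q.2 + 1)
  have h4' : (q.2 : ℝ) ≤ v.2 := by exact_mod_cast h4
  refine ⟨?_, ?_, ?_, ?_⟩ <;> simp only [latticePoint] <;> gcongr

lemma latticePoint_mem_frontier {θ : ℝ} (hθ : 0 < θ) {v q : ℤ × ℤ} (h : Around v q) :
    latticePoint θ v ∈ frontier (stdSquare θ q) := by
  have hmem := latticePoint_mem hθ h
  refine ⟨subset_closure hmem, ?_⟩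
  have hset : stdSquare θ q =
      Set.Icc (q.1 * θ) ((q.1 + 1) * θ) ×ℂ Set.Icc (q.2 * θ) ((q.2 + 1) * θ) := by
    ext z
    simp [stdSquare, Complex.mem_reProdIm, and_assoc]
  rw [hset, Complex.interior_reProdIm, interior_Icc, interior_Icc, Complex.mem_reProdIm]
  rintro ⟨⟨ha, hb⟩, -⟩
  simp only [latticePoint] at ha hb
  have ha' : (q.1 : ℝ) < v.1 := lt_of_mul_lt_mul_right ha hθ.le
  have hb' : (v.1 : ℝ) < q.1 + 1 := lt_of_mul_lt_mul_right hb hθ.le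
  have ha'' : q.1 < v.1 := by exact_mod_cast ha'
  have hb'' : v.1 < q.1 + 1 := by exact_mod_cast hb'
  omega

lemma sqNbr_of_around {θ : ℝ} (hθ : 0 < θ) {v p q : ℤ × ℤ} (hp : Around v p) (hq : Around v q)
    (hne : p ≠ q) : sqNbr θ p q :=
  ⟨hne, latticePoint θ v, latticePoint_mem_frontier hθ hp, latticePoint_mem_frontier hθ hq⟩

lemma floor_around_round {s u : ℝ} (h : |s - u| < 1 / 2) :
    round u - 1 ≤ ⌊s⌋ ∧ ⌊s⌋ ≤ round u := by
  have h1 := abs_le.1 (abs_sub_round u)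
  have h2 := abs_lt.1 h
  constructor
  · rw [Int.le_floor]
    push_cast
    linarith
  · have : ⌊s⌋ < round u + 1 := by
      rw [Int.floor_lt]
      push_cast
      linarith
    omega

/-- The grid square with the floors of the scaled coordinates of `z` as its index, which contains
`z`, touches the nearest vertex of every point less than `θ/2` away from `z`. -/
lemma around_floor {θ : ℝ} (hθ : 0 < θ) {y z : ℂ} (h : dist z y < θ / 2) :
    Around (nearestVertex θ y) (⌊z.re / θ⌋, ⌊z.im / θ⌋) := by
  have hre : |z.re - y.re| < θ / 2 :=
    lt_of_le_of_lt (by simpa [Complex.dist_eq] using Complex.abs_re_le_norm (z - y)) h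
  have him : |z.im - y.im| < θ / 2 :=
    lt_of_le_of_lt (by simpa [Complex.dist_eq] using Complex.abs_im_le_norm (z - y)) h
  have scale : ∀ s u : ℝ, |s - u| < θ / 2 → |s / θ - u / θ| < 1 / 2 := by
    intro s u hsu
    rw [← sub_div, abs_div, abs_of_pos hθ, div_lt_iff₀ hθ]
    linarith
  exact ⟨floor_around_round (scale _ _ hre), floor_around_round (scale _ _ him)⟩

lemma mem_stdSquare_floor {θ : ℝ} (hθ : 0 < θ) (z : ℂ) :
    z ∈ stdSquare θ (⌊z.re / θ⌋, ⌊z.im / θ⌋) := by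
  refine ⟨?_, ?_, ?_, ?_⟩
  · exact (le_div_iff₀ hθ).1 (Int.floor_le _)
  · exact (div_le_iff₀ hθ).1 (Int.lt_floor_add_one _).le
  · exact (le_div_iff₀ hθ).1 (Int.floor_le _)
  · exact (div_le_iff₀ hθ).1 (Int.lt_floor_add_one _).le

/-- If `4k` points of `P` lie within `4θ/9` of `y`, and `y'` is within `θ/18` of `y`, then some
square containing `k` points of `P` has the nearest vertices of both `y` and `y'` as corners. -/
lemma exists_common_full {θ : ℝ} (hθ : 0 < θ) {k : ℕ} (hk : 1 ≤ k) {P : Set ℂ} {y y' : ℂ}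
    (t : Finset ℂ) (htP : ∀ z ∈ t, z ∈ P) (hty : ∀ z ∈ t, dist z y < 4 * θ / 9)
    (hcard : t.card = 4 * k) (hyy : dist y y' < θ / 18) :
    ∃ q, hasAtLeast k (P ∩ stdSquare θ q) ∧ Around (nearestVertex θ y) q ∧
      Around (nearestVertex θ y') q := by
  classical
  set f : ℂ → ℤ × ℤ := fun z => (⌊z.re / θ⌋, ⌊z.im / θ⌋) with hf
  set v := nearestVertex θ y with hv
  have hA : ∀ z ∈ t, Around v (f z) := fun z hz => around_floor hθ (by linarith [hty z hz])
  have hA' : ∀ z ∈ t, Around (nearestVertex θ y') (f z) := fun z hz =>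
    around_floor hθ (by linarith [hty z hz, dist_triangle z y y'])
  obtain ⟨q, -, hq⟩ := Finset.exists_le_card_fiber_of_mul_le_card_of_maps_to (s := t) (f := f)
    (t := Finset.Icc (v.1 - 1) v.1 ×ˢ Finset.Icc (v.2 - 1) v.2) (n := k)
    (by
      intro z hz
      obtain ⟨h1, h2⟩ := hA z hz
      simp only [Finset.mem_product, Finset.mem_Icc]
      exact ⟨h1, h2⟩)
    ⟨v, by simp⟩
    (by
      rw [Finset.card_product, Int.card_Icc, Int.card_Icc, hcard]
      have h1 : (v.1 + 1 - (v.1 - 1)).toNat = 2 := by omega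
      have h2 : (v.2 + 1 - (v.2 - 1)).toNat = 2 := by omega
      rw [h1, h2])
  obtain ⟨z, hz⟩ := Finset.card_pos.1 (lt_of_lt_of_le hk hq)
  obtain ⟨hzt, rfl⟩ := Finset.mem_filter.1 hz
  obtain ⟨u, hu, huk⟩ := Finset.exists_subset_card_eq hq
  refine ⟨f z, ⟨u, ?_, huk⟩, hA z hzt, hA' z hzt⟩
  intro x hx
  obtain ⟨hxt, hxf⟩ := Finset.mem_filter.1 (hu hx)
  exact ⟨htP x hxt, hxf ▸ mem_stdSquare_floor hθ x⟩

/-! ### The graph of full squares -/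

/-- The neighbour graph on the standard squares containing at least `k` points of `P`. -/
def fullGraph (θ : ℝ) (k : ℕ) (P : Set ℂ) :
    SimpleGraph {q : ℤ × ℤ // hasAtLeast k (P ∩ stdSquare θ q)} where
  Adj p q := sqNbr θ p q
  symm := ⟨fun _ _ h => ⟨h.1.symm, by rw [Set.inter_comm]; exact h.2⟩⟩
  loopless := ⟨fun _ h => h.1 rfl⟩

/-- The full squares around the vertices nearest to `x` and to `y` exist and all lie in one
component of the graph of full squares. -/
def Linked (θ : ℝ) (k : ℕ) (P : Set ℂ) (x y : ℂ) : Prop :=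
  (∃ p : {q : ℤ × ℤ // hasAtLeast k (P ∩ stdSquare θ q)}, Around (nearestVertex θ x) p) ∧
  (∃ p : {q : ℤ × ℤ // hasAtLeast k (P ∩ stdSquare θ q)}, Around (nearestVertex θ y) p) ∧
  ∀ p q : {q : ℤ × ℤ // hasAtLeast k (P ∩ stdSquare θ q)}, Around (nearestVertex θ x) p →
    Around (nearestVertex θ y) q → (fullGraph θ k P).Reachable p q

lemma Linked.symm {θ : ℝ} {k : ℕ} {P : Set ℂ} {x y : ℂ} (h : Linked θ k P x y) :
    Linked θ k P y x :=
  ⟨h.2.1, h.1, fun p q hp hq => (h.2.2 q p hq hp).symm⟩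

lemma Linked.trans {θ : ℝ} {k : ℕ} {P : Set ℂ} {x y z : ℂ} (h : Linked θ k P x y)
    (h' : Linked θ k P y z) : Linked θ k P x z := by
  obtain ⟨m, hm⟩ := h.2.1
  exact ⟨h.1, h'.2.1, fun p q hp hq => (h.2.2 p m hp hm).trans (h'.2.2 m q hm hq)⟩

lemma reachable_of_around {θ : ℝ} (hθ : 0 < θ) {k : ℕ} {P : Set ℂ} {v : ℤ × ℤ}
    {p q : {q : ℤ × ℤ // hasAtLeast k (P ∩ stdSquare θ q)}} (hp : Around v p) (hq : Around v q) :
    (fullGraph θ k P).Reachable p q := by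
  by_cases h : p = q
  · rw [h]
  · exact SimpleGraph.Adj.reachable (G := fullGraph θ k P)
      (sqNbr_of_around hθ hp hq (fun hpq => h (Subtype.ext hpq)))

/-- A full square touching the nearest vertices of both points links them. -/
lemma linked_of_common {θ : ℝ} (hθ : 0 < θ) {k : ℕ} {P : Set ℂ} {x y : ℂ}
    (h : ∃ q, hasAtLeast k (P ∩ stdSquare θ q) ∧ Around (nearestVertex θ x) q ∧
      Around (nearestVertex θ y) q) : Linked θ k P x y := by
  obtain ⟨m, hm, hx, hy⟩ := h
  exact ⟨⟨⟨m, hm⟩, hx⟩, ⟨⟨m, hm⟩, hy⟩, fun p q hp hq =>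
    (reachable_of_around hθ hp (q := ⟨m, hm⟩) hx).trans (reachable_of_around hθ hy hq)⟩

/-- Reachability in the graph of full squares yields a non-repeating lattice path. -/
lemma exists_lattice_path {θ : ℝ} {k : ℕ} {P : Set ℂ}
    {p q : {q : ℤ × ℤ // hasAtLeast k (P ∩ stdSquare θ q)}}
    (h : (fullGraph θ k P).Reachable p q) :
    ∃ Γ : List (ℤ × ℤ), p.1 ∈ Γ ∧ q.1 ∈ Γ ∧ Γ.IsChain (sqNbr θ) ∧ Γ.Nodup ∧
      ∀ s ∈ Γ, hasAtLeast k (P ∩ stdSquare θ s) := by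
  obtain ⟨w, hw⟩ := h.exists_isPath
  refine ⟨w.support.map Subtype.val, List.mem_map_of_mem w.start_mem_support,
    List.mem_map_of_mem w.end_mem_support, ?_, hw.support_nodup.map Subtype.val_injective, ?_⟩
  · rw [List.isChain_map]
    exact w.isChain_adj_support
  · intro s hs
    obtain ⟨full, -, rfl⟩ := List.mem_map.1 hs
    exact full.2

/-! ### Nearest vertices at the two ends -/

lemma latticePoint_nearestVertex_zero (θ : ℝ) : latticePoint θ (nearestVertex θ 0) = 0 := by
  simp [latticePoint, nearestVertex, Complex.ext_iff]

/-- Rounding to the grid fixes the coordinate of absolute value `Lθ` and is monotone in the other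
one, so the nearest vertex of a point of `W_{Lθ}` is again on `W_{Lθ}`. -/
lemma latticePoint_nearestVertex_mem_Wbox {θ : ℝ} (hθ : 0 < θ) {L : ℕ} {w : ℂ}
    (hw : w ∈ Wbox (L * θ)) : latticePoint θ (nearestVertex θ w) ∈ Wbox (L * θ) := by
  have hmono : ∀ s u : ℝ, s ≤ u → round s ≤ round u := by
    intro s u h
    rw [round_eq, round_eq]
    exact Int.floor_mono (by linarith)
  have hle : ∀ s : ℝ, |s| ≤ L * θ → |(round (s / θ) : ℝ) * θ| ≤ L * θ := by
    intro s hs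
    obtain ⟨h1, h2⟩ := abs_le.1 hs
    have h3 : (round (s / θ) : ℤ) ≤ (L : ℤ) := by
      have := hmono _ _ ((div_le_iff₀ hθ).2 h2)
      rwa [round_natCast] at this
    have h4 : (-(L : ℤ)) ≤ round (s / θ) := by
      have := hmono _ _ ((le_div_iff₀ hθ (a := ((-(L : ℤ) : ℤ) : ℝ))).2
        (by push_cast; linarith : _ ≤ s))
      rwa [round_intCast] at this
    have h3' : (round (s / θ) : ℝ) ≤ L := by exact_mod_cast h3
    have h4' : -(L : ℝ) ≤ round (s / θ) := by exact_mod_cast h4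
    rw [abs_mul, abs_of_pos hθ]
    exact mul_le_mul_of_nonneg_right (abs_le.2 ⟨h4', h3'⟩) hθ.le
  have heq : ∀ s : ℝ, |s| = L * θ → |(round (s / θ) : ℝ) * θ| = L * θ := by
    intro s hs
    have hLθ : (0 : ℝ) ≤ L * θ := by positivity
    rcases (abs_eq hLθ).1 hs with h | h
    · have : s / θ = ((L : ℤ) : ℝ) := by rw [h]; push_cast; field_simp
      rw [this, round_intCast]
      push_cast
      exact abs_of_nonneg hLθ
    · have : s / θ = ((-(L : ℤ) : ℤ) : ℝ) := by rw [h]; push_cast; field_simp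
      rw [this, round_intCast]
      push_cast
      rw [neg_mul, abs_neg]
      exact abs_of_nonneg hLθ
  simp only [Wbox, Set.mem_ofPred_eq, latticePoint, nearestVertex] at hw ⊢
  have hre : |w.re| ≤ L * θ := hw ▸ le_max_left _ _
  have him : |w.im| ≤ L * θ := hw ▸ le_max_right _ _
  rcases max_choice |w.re| |w.im| with h | h
  · rw [heq w.re (h ▸ hw)]
    exact max_eq_left (hle _ him)
  · rw [heq w.im (h ▸ hw)]
    exact max_eq_right (hle _ hre)

/-- Continuum paths yield `k`-full lattice paths: if `0 < r < θ/(18k)` and a continuum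
path with vertices in the locally finite set `P` (radius `r`) connects the origin to
`W_{Lθ}`, then there is a non-repeating lattice path of standard squares of side `θ`
connecting the origin to `W_{Lθ}`, each of whose squares contains at least `k` points
of `P`. -/
theorem continuum_path_to_full_lattice_path
    (θ : ℝ) (hθ : 0 < θ) (k : ℕ) (hk : 1 ≤ k)
    (r : ℝ) (hr0 : 0 < r) (hr : r < θ / (18 * k))
    (P : Set ℂ) (hlf : ∀ B : Set ℂ, Bornology.IsBounded B → (P ∩ B).Finite)
    (L : ℕ) (hL : 0 < L)
    (γ : List ℂ) (hne : γ ≠ []) (hmem : ∀ x ∈ γ, x ∈ P)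
    (hchain : γ.Chain' (fun x y => dist x y < 2 * r))
    (h0 : (0 : ℂ) ∈ contS r γ) (hW : (contS r γ ∩ Wbox (L * θ)).Nonempty) :
    ∃ Γ : List (ℤ × ℤ), Γ ≠ [] ∧ Γ.Chain' (sqNbr θ) ∧ Γ.Nodup ∧
      (0 : ℂ) ∈ latticeV θ Γ ∧ (latticeV θ Γ ∩ Wbox (L * θ)).Nonempty ∧
      ∀ p ∈ Γ, hasAtLeast k (P ∩ stdSquare θ p) := by
  have hchain' : γ.IsChain (fun x y => dist x y < 2 * r) := hchain
  have hkR : (1 : ℝ) ≤ k := by exact_mod_cast hk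
  have hkr : 18 * k * r < θ := by
    rw [lt_div_iff₀ (by positivity)] at hr
    linarith
  have hr18 : r < θ / 18 := by nlinarith
  obtain ⟨w, hwS, hwW⟩ := hW
  have hS : ∀ y, y ∈ contS r γ ↔ ∃ x ∈ γ, dist x y < r := by
    intro y
    simp [contS, dist_comm]
  obtain ⟨x₀, hx₀, hx₀d⟩ := (hS 0).1 h0
  obtain ⟨x₁, hx₁, hx₁d⟩ := (hS w).1 hwS
  have hw : θ ≤ dist 0 w := by
    have h1 : (L : ℝ) * θ ≤ ‖w‖ := by
      rw [← (show max |w.re| |w.im| = L * θ from hwW)]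
      exact max_le (Complex.abs_re_le_norm w) (Complex.abs_im_le_norm w)
    have h2 : (1 : ℝ) ≤ L := by exact_mod_cast hL
    rw [dist_zero_left]
    nlinarith
  have hstep : ∀ y ∈ contS r γ, ∀ y', dist y y' < r → Linked θ k P y y' := by
    intro y hy y' hyy
    obtain ⟨a, ha, hay⟩ := (hS y).1 hy
    -- `x₀` and `x₁` are more than `θ - 2r > 8θ/9` apart, so one of them is far from `y`.
    have hfar : ∃ b ∈ γ, 4 * θ / 9 ≤ dist b y := by
      by_contra! hcon
      have h1 := hcon x₀ hx₀
      have h2 := hcon x₁ hx₁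
      have h3 := dist_triangle4 0 x₀ y x₁
      have h4 := dist_triangle 0 x₁ w
      rw [dist_comm 0 x₀, dist_comm y x₁] at h3
      linarith
    obtain ⟨b, hb, hby⟩ := hfar
    obtain ⟨t, ht, htc⟩ := exists_many_points hr0 hchain' y ha hb hay (4 * k)
      (by push_cast; linarith) hby
    exact linked_of_common hθ (exists_common_full hθ hk t (fun z hz => hmem z (ht z hz).1)
      (fun z hz => (ht z hz).2) htc (hyy.trans hr18))
  have hγS : ∀ x ∈ γ, x ∈ contS r γ := fun x hx => (hS x).2 ⟨x, hx, by simpa using hr0⟩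
  have hall := chain_linked (E := Linked θ k P) (fun _ _ h => h.symm) (fun _ _ _ h h' => h.trans h')
    γ hchain' (fun x hx => hstep x (hγS x hx) x (by simpa using hr0))
    (by
      intro x hx y hy hxy
      -- A step is shorter than `2r`, and is split at its midpoint.
      refine (hstep x (hγS x hx) (midpoint ℝ x y) ?_).trans
        (hstep y (hγS y hy) (midpoint ℝ x y) ?_).symm
      · rw [dist_left_midpoint]
        norm_num
        linarith
      · rw [dist_right_midpoint]
        norm_num
        linarith)
  have hlink : Linked θ k P 0 w :=
    ((hstep x₀ (hγS _ hx₀) 0 hx₀d).symm.trans (hall x₀ hx₀ x₁ hx₁)).trans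
      (hstep x₁ (hγS _ hx₁) w hx₁d)
  obtain ⟨⟨p, hp⟩, ⟨q, hq⟩, hreach⟩ := hlink
  obtain ⟨Γ, hpΓ, hqΓ, hc, hnd, hfull⟩ := exists_lattice_path (hreach p q hp hq)
  refine ⟨Γ, List.ne_nil_of_mem hpΓ, hc, hnd, ?_, ?_, hfull⟩
  · refine Set.mem_biUnion hpΓ ?_
    rw [← latticePoint_nearestVertex_zero θ]
    exact latticePoint_mem hθ hp
  · exact ⟨latticePoint θ (nearestVertex θ w), Set.mem_biUnion hqΓ (latticePoint_mem hθ hq),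
      latticePoint_nearestVertex_mem_Wbox hθ hwW⟩
end

section
/- Lemma (length of the removed portion in the Cantor-type construction): Let A > 0, θ > 0 and 0 < λ < 1. Let L ≥ 1 be an integer and let N ≥ 1 be an integer satisfying λL ≤ 2^N ≤ 2λL. Then Σ_{j=1}^{N} 2^{j−1} · 2Aθ · log₂(L/2^j) ≤ 4A·(λ·log₂(1/λ))·L·θ + 4A·λ·L·θ. -/
/-!
Writing `ℓ = log₂ L`, each logarithm is `ℓ - j`, and the arithmetic-geometric sum has the closed form
`∑_{j=1}^{N} 2^{j-1} (ℓ - j) = 2^N (ℓ - N + 1) - ℓ - 1` (`sum_two_pow_mul_sub`).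
The lower bound `λL ≤ 2^N` gives `ℓ - N ≤ log₂(1/λ)`, and then `2^N ≤ 2λL` gives
`2^N (ℓ - N + 1) ≤ 2λL (log₂(1/λ) + 1)`; the remaining term `-ℓ - 1` is negative as `L ≥ 1`.
-/

lemma sum_two_pow_mul_sub (l : ℝ) (N : ℕ) :
    ∑ j ∈ Finset.Icc 1 N, (2 : ℝ) ^ (j - 1) * (l - j) = 2 ^ N * (l - N + 1) - l - 1 := by
  induction N with
  | zero => simp
  | succ n ih =>
    rw [Finset.sum_Icc_succ_top (by omega), ih]
    simp only [Nat.add_sub_cancel]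
    push_cast
    ring

/-- Length bound for the removed portion in the Cantor-type construction: if
`λL ≤ 2^N ≤ 2λL` then
`∑_{j=1}^{N} 2^{j-1} · 2Aθ · log₂(L/2^j) ≤ 4A(λ log₂(1/λ))Lθ + 4AλLθ`. -/
theorem cantor_removed_length_bound
    (A θ lam : ℝ) (hA : 0 < A) (hθ : 0 < θ) (hlam0 : 0 < lam) (hlam1 : lam < 1)
    (L N : ℕ) (hL : 1 ≤ L) (hN : 1 ≤ N)
    (h1 : lam * L ≤ 2 ^ N) (h2 : (2 : ℝ) ^ N ≤ 2 * lam * L) :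
    ∑ j ∈ Finset.Icc 1 N, (2 : ℝ) ^ (j - 1) * (2 * A * θ) * Real.logb 2 (L / 2 ^ j) ≤
      4 * A * (lam * Real.logb 2 (1 / lam)) * L * θ + 4 * A * lam * L * θ := by
  have hL1 : (1 : ℝ) ≤ L := by exact_mod_cast hL
  have hL0 : (0 : ℝ) < L := by linarith
  have hpow (j : ℕ) : Real.logb 2 ((2 : ℝ) ^ j) = j := by
    rw [Real.logb_pow, Real.logb_self_eq_one (by norm_num), mul_one]
  have hsum : ∑ j ∈ Finset.Icc 1 N, (2 : ℝ) ^ (j - 1) * (2 * A * θ) * Real.logb 2 (L / 2 ^ j)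
      = 2 * A * θ * (2 ^ N * (Real.logb 2 L - N + 1) - Real.logb 2 L - 1) := by
    rw [← sum_two_pow_mul_sub, Finset.mul_sum]
    refine Finset.sum_congr rfl fun j _ => ?_
    rw [Real.logb_div hL0.ne' (by positivity), hpow]
    ring
  have hl : 0 ≤ Real.logb 2 (L : ℝ) := Real.logb_nonneg (by norm_num) hL1
  have hinv : Real.logb 2 (1 / lam) = -Real.logb 2 lam := by
    rw [one_div, Real.logb_inv]
  have hlog : 0 < Real.logb 2 (1 / lam) := by
    rw [hinv]
    linarith [Real.logb_neg (b := 2) (by norm_num) hlam0 hlam1]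
  have hN' : Real.logb 2 L - N ≤ Real.logb 2 (1 / lam) := by
    have h := Real.logb_le_logb_of_le (b := 2) (by norm_num) (by positivity) h1
    rw [Real.logb_mul hlam0.ne' hL0.ne', hpow] at h
    linarith
  have hkey : (2 : ℝ) ^ N * (Real.logb 2 L - N + 1)
      ≤ 2 * lam * L * (Real.logb 2 (1 / lam) + 1) :=
    calc (2 : ℝ) ^ N * (Real.logb 2 L - N + 1)
        ≤ 2 ^ N * (Real.logb 2 (1 / lam) + 1) := by gcongr
      _ ≤ _ := by gcongr
  rw [hsum]
  calc _ ≤ 2 * A * θ * (2 * lam * L * (Real.logb 2 (1 / lam) + 1)) := by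
        gcongr
        linarith
    _ = _ := by ring
end
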